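/- arXiv:1605.06774 — 2 statements merged into one kernel-verified Lean document; each statement's English description precedes it below -/
import Mathlib

section
/- A positive integer n is an i-congruent number if and only if there exist positive integers x > y with gcd(x, y) = 1 and x + y odd, and a positive integer t, such that either n = (x^2 - y^2)*t with t ≥ x*y, or n = x*y*t with t odd and t ≥ x^2 - y^2. -/
/-- A positive integer `n` is an *i-congruent number* if it is the area of a right trapezoid
with integer side lengths: parallel sides `a > d ≥ 0`, height `b`, slant side `c`,
with `gcd b c = 1`. -/
def ICongruent (n : ℕ) : Prop :=
  ∃ a b c d : ℕ, 0 < a ∧ 0 < b ∧ 0 < c ∧ d < a ∧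
    2 * n = (a + d) * b ∧ (a - d) ^ 2 + b ^ 2 = c ^ 2 ∧ Nat.gcd b c = 1

theorem gcd_transfer {e b c : ℕ} (h : e ^ 2 + b ^ 2 = c ^ 2) :
    Nat.gcd b c = 1 ↔ Nat.gcd e b = 1 := by
  change Nat.Coprime b c ↔ Nat.Coprime e b
  rw [← Nat.coprime_pow_left_iff (n := 2) (by norm_num) b c,
    ← Nat.coprime_pow_right_iff (n := 2) (by norm_num) (b ^ 2) c, ← h,
    Nat.coprime_add_self_right, Nat.coprime_pow_left_iff (by norm_num),
    Nat.coprime_pow_right_iff (by norm_num), Nat.coprime_comm]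

theorem triple_param {e b c : ℕ} (he : 0 < e) (hb : 0 < b) (h : e ^ 2 + b ^ 2 = c ^ 2)
    (hg : Nat.gcd e b = 1) :
    ∃ x y : ℕ, 0 < y ∧ y < x ∧ Nat.gcd x y = 1 ∧ Odd (x + y) ∧
      ((e + y ^ 2 = x ^ 2 ∧ b = 2 * (x * y)) ∨ (e = 2 * (x * y) ∧ b + y ^ 2 = x ^ 2)) := by
  have hp : PythagoreanTriple (e : ℤ) b c := by
    unfold PythagoreanTriple
    have : (e : ℤ) ^ 2 + b ^ 2 = c ^ 2 := by exact_mod_cast h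
    linarith
  obtain ⟨m, k, h1, -, h3, h4⟩ := PythagoreanTriple.coprime_classification.mp
    ⟨hp, by simpa [Int.gcd] using hg⟩
  have he' : (0 : ℤ) < e := by exact_mod_cast he
  have hb' : (0 : ℤ) < b := by exact_mod_cast hb
  have hmk : 0 < m * k ∧ k ^ 2 < m ^ 2 := by
    rcases h1 with ⟨h1, h2⟩ | ⟨h1, h2⟩ <;> constructor <;> nlinarith
  obtain ⟨hmk, hlt⟩ := hmk
  have hk : k ≠ 0 := by rintro rfl; simp at hmk
  have hprod : ((m.natAbs : ℤ) * k.natAbs) = m * k := by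
    rw [Int.natCast_natAbs, Int.natCast_natAbs, ← abs_mul, abs_of_pos hmk]
  refine ⟨m.natAbs, k.natAbs, Int.natAbs_pos.mpr hk, ?_, h3, ?_, ?_⟩
  · exact Int.natAbs_lt_iff_sq_lt.mpr hlt
  · rw [Nat.odd_iff]; omega
  · rcases h1 with ⟨h1, h2⟩ | ⟨h1, h2⟩
    · left
      constructor
      · zify; rw [sq_abs, sq_abs]; linarith
      · have : (b : ℤ) = 2 * (m.natAbs * k.natAbs) := by rw [hprod]; linarith
        exact_mod_cast this
    · right
      constructor
      · have : (e : ℤ) = 2 * (m.natAbs * k.natAbs) := by rw [hprod]; linarith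
        exact_mod_cast this
      · zify; rw [sq_abs, sq_abs]; linarith

theorem param_triple {x y e : ℕ} (hg : Nat.gcd x y = 1) (ho : Odd (x + y))
    (he : e + y ^ 2 = x ^ 2) :
    e ^ 2 + (2 * (x * y)) ^ 2 = (x ^ 2 + y ^ 2) ^ 2 ∧ Nat.gcd e (2 * (x * y)) = 1 := by
  have hE : (e : ℤ) = x ^ 2 - y ^ 2 := by
    have : (e : ℤ) + y ^ 2 = x ^ 2 := by exact_mod_cast he
    linarith
  rw [Nat.odd_iff] at ho
  have := (PythagoreanTriple.coprime_classification (x := (e : ℤ))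
    (y := ((2 * (x * y) : ℕ) : ℤ)) (z := (x : ℤ) ^ 2 + y ^ 2)).mpr
    ⟨x, y, Or.inl ⟨hE, by push_cast; ring⟩, Or.inl rfl, by simpa [Int.gcd] using hg, by omega⟩
  constructor
  · zify; rw [hE]; ring
  · simpa only [Int.gcd, Int.natAbs_natCast] using this.2

theorem icongruent_iff_param (n : ℕ) (hn : 0 < n) :
    ICongruent n ↔
      ∃ x y t : ℕ, 0 < y ∧ y < x ∧ Nat.gcd x y = 1 ∧ Odd (x + y) ∧ 0 < t ∧
        ((n = (x ^ 2 - y ^ 2) * t ∧ x * y ≤ t) ∨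
         (n = x * y * t ∧ Odd t ∧ x ^ 2 - y ^ 2 ≤ t)) := by
  constructor
  · rintro ⟨a, b, c, d, ha, hb, hc, hd, h1, h2, h3⟩
    obtain ⟨e, rfl⟩ : ∃ e, a = d + e := ⟨a - d, by omega⟩
    rw [Nat.add_sub_cancel_left] at h2
    rw [gcd_transfer h2] at h3
    obtain ⟨x, y, hy, hxy, hg, ho, h | h⟩ := triple_param (by omega) hb h2 h3
    · obtain ⟨h4, h5⟩ := h
      have hodd : Odd e := by
        rw [h5] at h3
        have : Nat.Coprime e 2 := Nat.Coprime.coprime_mul_right_right h3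
        exact Nat.coprime_two_right.mp this
      refine ⟨x, y, d + e + d, hy, hxy, hg, ho, by omega, Or.inr ⟨?_, ?_, by omega⟩⟩
      · rw [h5] at h1; nlinarith
      · rw [Nat.odd_iff] at *; omega
    · obtain ⟨h4, h5⟩ := h
      refine ⟨x, y, d + x * y, hy, hxy, hg, ho, by omega, Or.inl ⟨?_, by omega⟩⟩
      have : x ^ 2 - y ^ 2 = b := by omega
      rw [this]; rw [h4] at h1; nlinarith
  · rintro ⟨x, y, t, hy, hxy, hg, ho, ht, h⟩
    have hlt : y ^ 2 < x ^ 2 := Nat.pow_lt_pow_left hxy (by norm_num)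
    obtain ⟨e, he⟩ : ∃ e, e = x ^ 2 - y ^ 2 := ⟨_, rfl⟩
    rw [← he] at h
    have he2 : e + y ^ 2 = x ^ 2 := by omega
    have he0 : 0 < e := by omega
    have hxy0 : 0 < x * y := Nat.mul_pos (by omega) hy
    have hc0 : 0 < x ^ 2 + y ^ 2 := by omega
    obtain ⟨p1, p2⟩ := param_triple hg ho he2
    rcases h with ⟨h1, h2⟩ | ⟨h1, h2, h3⟩
    · obtain ⟨s, rfl⟩ := Nat.exists_eq_add_of_le h2
      have p1' : (2 * (x * y)) ^ 2 + e ^ 2 = (x ^ 2 + y ^ 2) ^ 2 := by rw [← p1]; ring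
      refine ⟨s + 2 * (x * y), e, x ^ 2 + y ^ 2, s, by omega, he0, hc0, by omega, ?_, ?_, ?_⟩
      · rw [h1]; ring
      · rw [Nat.add_sub_cancel_left]; exact p1'
      · rw [gcd_transfer p1', Nat.gcd_comm]; exact p2
    · have hodd : Odd e := by
        have : Nat.Coprime e 2 := Nat.Coprime.coprime_mul_right_right p2
        exact Nat.coprime_two_right.mp this
      obtain ⟨s, hs⟩ : ∃ s, t = e + 2 * s := ⟨(t - e) / 2, by rw [Nat.odd_iff] at *; omega⟩
      refine ⟨s + e, 2 * (x * y), x ^ 2 + y ^ 2, s, by omega, by omega, hc0, by omega, ?_, ?_, ?_⟩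
      · rw [h1, hs]; ring
      · rw [Nat.add_sub_cancel_left]; exact p1
      · rw [gcd_transfer p1]; exact p2
end

section
/- Let f(x) denote the number of positive integers n ≤ x that are not i-congruent numbers. Then f(x) is asymptotically equal to c*x/log x as x → ∞, where c = 1 + log 2 and log denotes the natural logarithm; that is, f(x) * (log x) / x tends to 1 + log 2 as x → ∞. -/
open scoped Classical in
/-- The number of positive integers `n ≤ x` that are not i-congruent numbers. -/
noncomputable def nonICongruentCount (x : ℝ) : ℕ :=
  ((Finset.Icc 1 ⌊x⌋₊).filter fun n => ¬ ICongruent n).card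


section

open MeasureTheory Filter Topology Set


namespace ICong

/-- The triangle function. -/
noncomputable def tri (t : ℝ) : ℝ := max 0 (2 - |t|)

lemma tri_continuous : Continuous tri := by unfold tri; fun_prop

lemma tri_eq_zero {t : ℝ} (h : t ∉ Icc (-2 : ℝ) 2) : tri t = 0 := by
  unfold tri
  apply max_eq_left
  by_contra! hh
  exact h (abs_le.mp (by linarith))

lemma tri_compact : HasCompactSupport tri :=
  HasCompactSupport.intro (K := Icc (-2 : ℝ) 2) isCompact_Icc (fun _ h => tri_eq_zero h)

lemma tri_half (v : ℝ) (hv : v ≠ 0) (σ : ℂ) (x y : ℝ) :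
    ∫ t in x..y, ((2 + σ * (t : ℂ)) * Complex.exp (Complex.I * v * t)) =
      ((2 + σ * y) * Complex.exp (Complex.I * v * y) / (Complex.I * v)
        - σ * Complex.exp (Complex.I * v * y) / (Complex.I * v) ^ 2) -
      ((2 + σ * x) * Complex.exp (Complex.I * v * x) / (Complex.I * v)
        - σ * Complex.exp (Complex.I * v * x) / (Complex.I * v) ^ 2) := by
  have hv' : (v : ℂ) ≠ 0 := by exact_mod_cast hv
  have hI : Complex.I ≠ 0 := Complex.I_ne_zero
  apply intervalIntegral.integral_eq_sub_of_hasDerivAt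
    (f := fun t : ℝ => (2 + σ * t) * Complex.exp (Complex.I * v * t) / (Complex.I * v)
        - σ * Complex.exp (Complex.I * v * t) / (Complex.I * v) ^ 2)
  · intro t _
    have h1 : HasDerivAt (fun t : ℝ => (t : ℂ)) 1 t := Complex.ofRealCLM.hasDerivAt
    have h2 : HasDerivAt (fun t : ℝ => Complex.exp (Complex.I * v * t))
        (Complex.exp (Complex.I * v * t) * (Complex.I * v * 1)) t := (h1.const_mul _).cexp
    have h3 : HasDerivAt (fun t : ℝ => (2 + σ * (t : ℂ))) (σ * 1) t := (h1.const_mul σ).const_add 2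
    have h4 := ((h3.mul h2).div_const (Complex.I * v)).sub
      ((h2.const_mul σ).div_const ((Complex.I * v) ^ 2))
    convert! h4 using 1
    field_simp
    ring
  · apply Continuous.intervalIntegrable
    fun_prop

lemma tri_fourier (v : ℝ) :
    ∫ t, (tri t : ℂ) * Complex.exp (Complex.I * v * t) = ((4 * Real.sinc v ^ 2 : ℝ) : ℂ) := by
  have h0 : ∫ t, (tri t : ℂ) * Complex.exp (Complex.I * v * t) =
      ∫ t in (-2 : ℝ)..2, (tri t : ℂ) * Complex.exp (Complex.I * v * t) := by
    rw [intervalIntegral.integral_of_le (by norm_num), ← integral_Icc_eq_integral_Ioc]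
    symm
    apply setIntegral_eq_integral_of_forall_compl_eq_zero
    intro t ht
    simp [tri_eq_zero ht]
  have hIntg : ∀ a b : ℝ, IntervalIntegrable
      (fun t : ℝ => (tri t : ℂ) * Complex.exp (Complex.I * v * t)) volume a b := by
    intro a b
    apply Continuous.intervalIntegrable
    have := tri_continuous
    fun_prop
  have e1 : ∫ t in (-2 : ℝ)..0, (tri t : ℂ) * Complex.exp (Complex.I * v * t) =
      ∫ t in (-2 : ℝ)..0, ((2 + (1 : ℂ) * (t : ℂ)) * Complex.exp (Complex.I * v * t)) := by
    apply intervalIntegral.integral_congr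
    intro t ht
    rw [uIcc_of_le (by norm_num)] at ht
    have : tri t = 2 + t := by
      unfold tri; rw [abs_of_nonpos ht.2, max_eq_right] <;> linarith [ht.1]
    simp [this]
  have e2 : ∫ t in (0 : ℝ)..2, (tri t : ℂ) * Complex.exp (Complex.I * v * t) =
      ∫ t in (0 : ℝ)..2, ((2 + (-1 : ℂ) * (t : ℂ)) * Complex.exp (Complex.I * v * t)) := by
    apply intervalIntegral.integral_congr
    intro t ht
    rw [uIcc_of_le (by norm_num)] at ht
    have : tri t = 2 - t := by
      unfold tri; rw [abs_of_nonneg ht.1, max_eq_right]; linarith [ht.2]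
    simp [this, sub_eq_add_neg]
  rw [h0, ← intervalIntegral.integral_add_adjacent_intervals (hIntg (-2) 0) (hIntg 0 2), e1, e2]
  by_cases hv : v = 0
  · subst hv
    simp
    have i1 : ∫ t in (-2 : ℝ)..0, (2 + (t : ℂ)) = ((∫ t in (-2 : ℝ)..0, (2 + t) : ℝ) : ℂ) := by
      rw [← intervalIntegral.integral_ofReal]; simp
    have i2 : ∫ t in (0 : ℝ)..2, (2 + -(t : ℂ)) = ((∫ t in (0 : ℝ)..2, (2 - t) : ℝ) : ℂ) := by
      rw [← intervalIntegral.integral_ofReal]; simp [sub_eq_add_neg]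
    rw [i1, i2, intervalIntegral.integral_add, intervalIntegral.integral_sub] <;> simp
    norm_num
  · rw [tri_half v hv 1, tri_half v hv (-1)]
    rw [Real.sinc_of_ne_zero hv]
    have hv' : (v : ℂ) ≠ 0 := by exact_mod_cast hv
    have hs : ((Real.sin v : ℝ) : ℂ) ^ 2 =
        -(Complex.exp (Complex.I * v * 2) + Complex.exp (Complex.I * v * (-2)) - 2) / 4 := by
      rw [Complex.ofReal_sin, Complex.sin]
      have a1 : Complex.exp (Complex.I * v * 2) = Complex.exp (v * Complex.I) ^ 2 := by
        rw [← Complex.exp_nat_mul]; congr 1; push_cast; ring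
      have a2 : Complex.exp (Complex.I * v * (-2)) = Complex.exp (-v * Complex.I) ^ 2 := by
        rw [← Complex.exp_nat_mul]; congr 1; push_cast; ring
      have a3 : Complex.exp (v * Complex.I) * Complex.exp (-v * Complex.I) = 1 := by
        rw [← Complex.exp_add]; simp
      rw [a1, a2]
      have hI : Complex.I ^ 2 = -1 := Complex.I_sq
      linear_combination (((Complex.exp (-v * Complex.I) - Complex.exp (v * Complex.I)) ^ 2) / 4) * hI
        + (1 / 2 : ℂ) * a3
    push_cast
    rw [div_pow, ← Complex.ofReal_sin, hs]
    have hI : Complex.I ^ 2 = -1 := Complex.I_sq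
    simp only [mul_zero, Complex.exp_zero, mul_pow, hI]
    field_simp
    ring

lemma sinc_sq_integrable : Integrable (fun v : ℝ => 4 * Real.sinc v ^ 2) := by
  have h : Integrable (fun v : ℝ => 8 * (1 + v ^ 2)⁻¹) := integrable_inv_one_add_sq.const_mul 8
  refine h.mono' (by have := Real.continuous_sinc; fun_prop) ?_
  refine Eventually.of_forall fun v => ?_
  rw [Real.norm_of_nonneg (by positivity), ← div_eq_mul_inv, le_div_iff₀ (by positivity)]
  have h1 : Real.sinc v ^ 2 ≤ 1 := by
    rw [sq_le_one_iff_abs_le_one]; exact Real.abs_sinc_le_one v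
  have h2 : Real.sinc v ^ 2 * v ^ 2 ≤ 1 := by
    by_cases hv : v = 0
    · simp [hv]
    rw [Real.sinc_of_ne_zero hv, div_pow, div_mul_cancel₀ _ (by positivity)]
    exact Real.sin_sq_le_one v
  nlinarith

lemma sinc_sq_integral_pos : 0 < ∫ v : ℝ, 4 * Real.sinc v ^ 2 := by
  apply integral_pos_of_integrable_nonneg_nonzero (x := 0)
  · have := Real.continuous_sinc; fun_prop
  · exact sinc_sq_integrable
  · intro v; positivity
  · simp

/-- There is a good kernel. -/
lemma exists_kernel : ∃ (k K : ℝ → ℝ), Continuous k ∧ HasCompactSupport k ∧ Continuous K ∧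
    Integrable K ∧ (∀ v, 0 ≤ K v) ∧ ∫ v, K v = 1 ∧
    ∀ v : ℝ, ∫ t, (k t : ℂ) * Complex.exp (Complex.I * v * t) = (K v : ℂ) := by
  set I := ∫ v : ℝ, 4 * Real.sinc v ^ 2 with hI
  have hIp : 0 < I := sinc_sq_integral_pos
  refine ⟨fun t => I⁻¹ * tri t, fun v => I⁻¹ * (4 * Real.sinc v ^ 2), ?_, ?_, ?_, ?_, ?_, ?_, ?_⟩
  · have := tri_continuous; fun_prop
  · exact tri_compact.mul_left
  · have := Real.continuous_sinc; fun_prop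
  · exact sinc_sq_integrable.const_mul _
  · intro v; positivity
  · rw [integral_const_mul, ← hI, inv_mul_cancel₀ hIp.ne']
  · intro v
    have := tri_fourier v
    push_cast at this ⊢
    rw [← this, ← integral_const_mul]
    congr 1; ext t; ring

end ICong

namespace ICong

lemma laplace_kernel_eq {B : ℝ → ℝ} {C : ℝ} (hBm : Measurable B) (hB0 : ∀ u, 0 ≤ B u)
    (hBC : ∀ u, B u ≤ C) {G : ℂ → ℂ}
    (hL : ∀ δ : ℝ, 0 < δ → ∀ t : ℝ, ∫ u in Ioi (0 : ℝ),
      ((B u - 1 : ℝ) : ℂ) * Complex.exp (-((δ : ℂ) + t * Complex.I) * u) = G (δ + t * Complex.I))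
    {k K : ℝ → ℝ} (hk : Continuous k) (hkc : HasCompactSupport k)
    (hkK : ∀ v : ℝ, ∫ t, (k t : ℂ) * Complex.exp (Complex.I * v * t) = (K v : ℂ))
    {δ : ℝ} (hδ : 0 < δ) (y : ℝ) :
    ∫ t : ℝ, Complex.exp (Complex.I * y * t) * ((k t : ℂ) * G (δ + t * Complex.I)) =
      ∫ u in Ioi (0 : ℝ), (((B u - 1) * Real.exp (-δ * u) * K (y - u) : ℝ) : ℂ) := by
  have hki : Integrable (fun t => (k t : ℂ)) := (hk.integrable_of_hasCompactSupport hkc).ofReal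
  have hbi : Integrable (fun u => (B u - 1) * Real.exp (-δ * u)) (volume.restrict (Ioi 0)) := by
    have h := (integrableOn_exp_mul_Ioi (a := -δ) (by linarith) 0).const_mul (C + 1)
    refine h.mono' (by fun_prop) (Eventually.of_forall fun u => ?_)
    rw [norm_mul, Real.norm_of_nonneg (Real.exp_pos _).le]
    gcongr
    rw [Real.norm_eq_abs, abs_le]
    constructor <;> linarith [hB0 u, hBC u]
  have hprod : Integrable (fun p : ℝ × ℝ => Complex.exp (Complex.I * y * p.1) * ((k p.1 : ℂ) *
      (((B p.2 - 1 : ℝ) : ℂ) * Complex.exp (-((δ : ℂ) + p.1 * Complex.I) * p.2))))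
      (volume.prod (volume.restrict (Ioi 0))) := by
    have h := hki.mul_prod (hbi.ofReal (𝕜 := ℂ))
    refine h.mono (by have := hk.measurable; fun_prop) (Eventually.of_forall fun p => ?_)
    simp only [norm_mul, Complex.norm_exp]
    simp [Complex.norm_exp]
  calc _ = ∫ t : ℝ, ∫ u in Ioi (0 : ℝ), Complex.exp (Complex.I * y * t) * ((k t : ℂ) *
      (((B u - 1 : ℝ) : ℂ) * Complex.exp (-((δ : ℂ) + t * Complex.I) * u))) := by
        congr 1; ext t
        rw [integral_const_mul, integral_const_mul, hL δ hδ t]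
    _ = ∫ u in Ioi (0 : ℝ), ∫ t : ℝ, Complex.exp (Complex.I * y * t) * ((k t : ℂ) *
      (((B u - 1 : ℝ) : ℂ) * Complex.exp (-((δ : ℂ) + t * Complex.I) * u))) :=
        integral_integral_swap hprod
    _ = _ := by
        congr 1; ext u
        push_cast
        rw [← hkK, ← integral_const_mul]
        congr 1; ext t
        have : Complex.exp (Complex.I * y * t) * Complex.exp (-((δ : ℂ) + t * Complex.I) * u) =
            Complex.exp (-δ * u) * Complex.exp (Complex.I * ((y - u : ℝ) : ℂ) * t) := by
          rw [← Complex.exp_add, ← Complex.exp_add]; congr 1; push_cast; ring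
        linear_combination (k t : ℂ) * ((B u : ℂ) - 1) * this

lemma kernel_eq {B : ℝ → ℝ} {C : ℝ} (hBm : Measurable B) (hB0 : ∀ u, 0 ≤ B u)
    (hBC : ∀ u, B u ≤ C) {G : ℂ → ℂ} (hG : ContinuousOn G {s | 0 ≤ s.re})
    (hL : ∀ δ : ℝ, 0 < δ → ∀ t : ℝ, ∫ u in Ioi (0 : ℝ),
      ((B u - 1 : ℝ) : ℂ) * Complex.exp (-((δ : ℂ) + t * Complex.I) * u) = G (δ + t * Complex.I))
    {k K : ℝ → ℝ} (hk : Continuous k) (hkc : HasCompactSupport k) (hKc : Continuous K)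
    (hK : Integrable K) (hK0 : ∀ v, 0 ≤ K v)
    (hkK : ∀ v : ℝ, ∫ t, (k t : ℂ) * Complex.exp (Complex.I * v * t) = (K v : ℂ)) (y : ℝ) :
    ∫ t : ℝ, Complex.exp (Complex.I * y * t) * ((k t : ℂ) * G (t * Complex.I)) =
      ∫ u in Ioi (0 : ℝ), (((B u - 1) * K (y - u) : ℝ) : ℂ) := by
  have hC0 : 0 ≤ C := (hB0 0).trans (hBC 0)
  have hcd : ∀ δ : ℝ, 0 ≤ δ → Continuous (fun t : ℝ => G (δ + t * Complex.I)) := by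
    intro δ hδ
    refine hG.comp_continuous (by fun_prop) fun t => ?_
    simpa using hδ
  have lim1 : Tendsto (fun δ : ℝ => ∫ t : ℝ, Complex.exp (Complex.I * y * t) *
      ((k t : ℂ) * G (δ + t * Complex.I))) (𝓝[>] 0)
      (𝓝 (∫ t : ℝ, Complex.exp (Complex.I * y * t) * ((k t : ℂ) * G (t * Complex.I)))) := by
    obtain ⟨M, hM⟩ : ∃ M, ∀ δ ∈ Icc (0 : ℝ) 1, ∀ t ∈ tsupport k, ‖G (δ + t * Complex.I)‖ ≤ M := by
      have hcomp : IsCompact (Icc (0 : ℝ) 1 ×ˢ tsupport k) := isCompact_Icc.prod hkc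
      have : ContinuousOn (fun p : ℝ × ℝ => G (p.1 + p.2 * Complex.I))
          (Icc (0 : ℝ) 1 ×ˢ tsupport k) := by
        refine hG.comp (by fun_prop) fun p hp => ?_
        simpa using hp.1.1
      obtain ⟨M, hM⟩ := hcomp.exists_bound_of_continuousOn this
      exact ⟨M, fun δ hδ t ht => hM (δ, t) ⟨hδ, ht⟩⟩
    apply tendsto_integral_filter_of_dominated_convergence (fun t => |k t| * M)
    · filter_upwards [self_mem_nhdsWithin] with δ hδ
      have := hcd δ (le_of_lt hδ)
      have h5 : Continuous (fun t : ℝ => Complex.exp (Complex.I * y * t)) := by fun_prop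
      exact (h5.mul ((Complex.continuous_ofReal.comp hk).mul this)).aestronglyMeasurable
    · have : Ioo (0 : ℝ) 1 ∈ 𝓝[>] (0 : ℝ) := Ioo_mem_nhdsGT one_pos
      filter_upwards [this] with δ hδ
      refine Eventually.of_forall fun t => ?_
      rw [norm_mul, norm_mul, Complex.norm_exp]
      simp only [Complex.norm_real, Real.norm_eq_abs]
      by_cases ht : t ∈ tsupport k
      · have := hM δ ⟨hδ.1.le, hδ.2.le⟩ t ht
        simp
        gcongr
      · simp [image_eq_zero_of_notMem_tsupport ht]
    · exact ((hk.integrable_of_hasCompactSupport hkc).abs).mul_const M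
    · refine Eventually.of_forall fun t => ?_
      apply Tendsto.const_mul
      apply Tendsto.const_mul
      have h1 : Tendsto G (𝓝[{s | 0 ≤ s.re}] (t * Complex.I)) (𝓝 (G (t * Complex.I))) :=
        hG _ (by simp)
      apply h1.comp
      apply tendsto_nhdsWithin_of_tendsto_nhds_of_eventually_within
      · have : Continuous (fun δ : ℝ => (δ : ℂ) + t * Complex.I) := by fun_prop
        have := this.tendsto 0
        simp only [Complex.ofReal_zero, zero_add] at this
        exact this.mono_left nhdsWithin_le_nhds
      · filter_upwards [self_mem_nhdsWithin] with δ hδ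
        simpa using le_of_lt hδ
  have lim2 : Tendsto (fun δ : ℝ => ∫ u in Ioi (0 : ℝ),
      (((B u - 1) * Real.exp (-δ * u) * K (y - u) : ℝ) : ℂ)) (𝓝[>] 0)
      (𝓝 (∫ u in Ioi (0 : ℝ), (((B u - 1) * K (y - u) : ℝ) : ℂ))) := by
    apply tendsto_integral_filter_of_dominated_convergence (fun u => (C + 1) * K (y - u))
    · refine Eventually.of_forall fun δ => ?_
      have := hKc.measurable
      exact Measurable.aestronglyMeasurable (by fun_prop)
    · filter_upwards [self_mem_nhdsWithin] with δ hδ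
      filter_upwards [ae_restrict_mem measurableSet_Ioi] with u hu
      rw [Complex.norm_real, norm_mul, norm_mul, Real.norm_of_nonneg (hK0 _),
        Real.norm_of_nonneg (Real.exp_pos _).le]
      have h1 : Real.exp (-δ * u) ≤ 1 := by
        apply Real.exp_le_one_iff.mpr
        have : 0 < δ * u := mul_pos hδ hu
        linarith
      have h2 : ‖B u - 1‖ ≤ C + 1 := by
        rw [Real.norm_eq_abs, abs_le]
        constructor <;> linarith [hB0 u, hBC u]
      have h3 : ‖B u - 1‖ * Real.exp (-δ * u) ≤ (C + 1) * 1 := by gcongr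
      have := hK0 (y - u)
      nlinarith
    · exact ((hK.comp_sub_left y).const_mul _).integrableOn
    · refine Eventually.of_forall fun u => ?_
      have : Continuous (fun δ : ℝ => (((B u - 1) * Real.exp (-δ * u) * K (y - u) : ℝ) : ℂ)) := by
        fun_prop
      have := this.tendsto 0
      simp only [neg_zero, zero_mul, Real.exp_zero, mul_one] at this
      exact this.mono_left nhdsWithin_le_nhds
  refine tendsto_nhds_unique lim1 (lim2.congr' ?_)
  filter_upwards [self_mem_nhdsWithin] with δ hδ
  exact (laplace_kernel_eq hBm hB0 hBC hL hk hkc hkK hδ y).symm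

lemma kernel_tendsto {B : ℝ → ℝ} {C : ℝ} (hBm : Measurable B) (hB0 : ∀ u, 0 ≤ B u)
    (hBC : ∀ u, B u ≤ C) {G : ℂ → ℂ} (hG : ContinuousOn G {s | 0 ≤ s.re})
    (hL : ∀ δ : ℝ, 0 < δ → ∀ t : ℝ, ∫ u in Ioi (0 : ℝ),
      ((B u - 1 : ℝ) : ℂ) * Complex.exp (-((δ : ℂ) + t * Complex.I) * u) = G (δ + t * Complex.I))
    {k K : ℝ → ℝ} (hk : Continuous k) (hkc : HasCompactSupport k) (hKc : Continuous K)
    (hK : Integrable K) (hK0 : ∀ v, 0 ≤ K v)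
    (hkK : ∀ v : ℝ, ∫ t, (k t : ℂ) * Complex.exp (Complex.I * v * t) = (K v : ℂ)) :
    Tendsto (fun y : ℝ => ∫ u in Ioi (0 : ℝ), (B u - 1) * K (y - u)) atTop (𝓝 0) := by
  have h1 := Real.tendsto_integral_exp_smul_cocompact (fun t : ℝ => (k t : ℂ) * G (t * Complex.I))
  have h2 : Tendsto (fun y : ℝ => -y / (2 * Real.pi)) atTop (cocompact ℝ) := by
    have : Tendsto (fun y : ℝ => -y / (2 * Real.pi)) atTop atBot :=
      tendsto_neg_atTop_atBot.atBot_div_const (by positivity)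
    exact this.mono_right atBot_le_cocompact
  have h3 := h1.comp h2
  have h4 : Tendsto (fun y : ℝ => ((∫ u in Ioi (0 : ℝ), (B u - 1) * K (y - u) : ℝ) : ℂ))
      atTop (𝓝 ((0 : ℝ) : ℂ)) := by
    rw [Complex.ofReal_zero]
    refine h3.congr fun y => ?_
    rw [← integral_complex_ofReal, ← kernel_eq hBm hB0 hBC hG hL hk hkc hKc hK hK0 hkK y]
    simp only [Function.comp]
    congr 1; ext t
    rw [Circle.smul_def, smul_eq_mul, Real.fourierChar_apply]
    congr 2
    push_cast
    have : (Real.pi : ℂ) ≠ 0 := by exact_mod_cast Real.pi_ne_zero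
    field_simp
  have h5 := (Complex.continuous_re.tendsto _).comp h4
  simpa [Function.comp_def] using h5

end ICong

namespace ICong

lemma scaled_tendsto {B : ℝ → ℝ} {C : ℝ} (hBm : Measurable B) (hB0 : ∀ u, 0 ≤ B u)
    (hBC : ∀ u, B u ≤ C) (hBneg : ∀ u ≤ 0, B u = 0)
    {G : ℂ → ℂ} (hG : ContinuousOn G {s | 0 ≤ s.re})
    (hL : ∀ δ : ℝ, 0 < δ → ∀ t : ℝ, ∫ u in Ioi (0 : ℝ),
      ((B u - 1 : ℝ) : ℂ) * Complex.exp (-((δ : ℂ) + t * Complex.I) * u) = G (δ + t * Complex.I))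
    {k K : ℝ → ℝ} (hk : Continuous k) (hkc : HasCompactSupport k) (hKc : Continuous K)
    (hK : Integrable K) (hK0 : ∀ v, 0 ≤ K v) (hK1 : ∫ v, K v = 1)
    (hkK : ∀ v : ℝ, ∫ t, (k t : ℂ) * Complex.exp (Complex.I * v * t) = (K v : ℂ))
    {l : ℝ} (hl : 0 < l) :
    Tendsto (fun y : ℝ => ∫ w, B (y - w / l) * K w) atTop (𝓝 1) := by
  have h1 := kernel_tendsto hBm hB0 hBC hG hL (k := fun t => k (t / l)) (K := fun v => l * K (l * v))
    (by fun_prop) (by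
      have := hkc.comp_homeomorph (Homeomorph.mulRight₀ l⁻¹ (inv_ne_zero hl.ne'))
      simpa [Function.comp_def, div_eq_mul_inv] using this) (by fun_prop)
    ((hK.comp_mul_left' hl.ne').const_mul l) (fun v => mul_nonneg hl.le (hK0 _)) (by
      intro v
      have e := Measure.integral_comp_div
        (fun t : ℝ => (k t : ℂ) * Complex.exp (Complex.I * ((l * v : ℝ) : ℂ) * t)) l
      rw [hkK, abs_of_pos hl] at e
      push_cast
      rw [Complex.real_smul] at e
      rw [← e]
      congr 1; ext t
      push_cast
      have : (l : ℂ) ≠ 0 := by exact_mod_cast hl.ne'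
      congr 2
      field_simp)
  have h2 : Tendsto (fun y : ℝ => ∫ w, (indicator (Ioi (0 : ℝ)) (fun _ => (1 : ℝ)) (y - w / l)) * K w)
      atTop (𝓝 1) := by
    conv in (𝓝 1) => rw [← hK1]
    apply tendsto_integral_filter_of_dominated_convergence K
    · refine Eventually.of_forall fun y => ?_
      have := hKc.measurable
      have h3 : Measurable (indicator (Ioi (0 : ℝ)) (fun _ => (1 : ℝ))) :=
        measurable_const.indicator measurableSet_Ioi
      exact Measurable.aestronglyMeasurable (by fun_prop)
    · refine Eventually.of_forall fun y => Eventually.of_forall fun w => ?_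
      rw [norm_mul, Real.norm_of_nonneg (hK0 w)]
      have : ‖indicator (Ioi (0 : ℝ)) (fun _ => (1 : ℝ)) (y - w / l)‖ ≤ 1 := by
        unfold indicator; split_ifs <;> simp
      have := hK0 w
      nlinarith
    · exact hK
    · refine Eventually.of_forall fun w => ?_
      apply tendsto_const_nhds.congr'
      filter_upwards [eventually_gt_atTop (w / l)] with y hy
      rw [indicator_of_mem (by simpa using hy), one_mul]
  have h3 := h1.add h2
  rw [zero_add] at h3
  refine h3.congr fun y => ?_
  have hcv : ∀ F : ℝ → ℝ, ∫ u, F u * (l * K (l * (y - u))) = ∫ w, F (y - w / l) * K w := by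
    intro F
    have e1 := integral_sub_left_eq_self (fun u => F u * (l * K (l * (y - u)))) volume y
    rw [← e1]
    have e2 := Measure.integral_comp_div (fun u => F (y - u) * (l * K (l * (y - (y - u))))) l
    rw [abs_of_pos hl, smul_eq_mul] at e2
    apply mul_left_cancel₀ hl.ne'
    rw [← e2, ← integral_const_mul]
    congr 1; ext w
    have : l * (y - (y - w / l)) = w := by field_simp; ring
    rw [this]; ring
  have hi : ∀ F : ℝ → ℝ, Measurable F → (∀ u, |F u| ≤ C + 1) →
      Integrable (fun w => F (y - w / l) * K w) := by
    intro F hFm hF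
    refine (hK.const_mul (C + 1)).mono' ?_ (Eventually.of_forall fun w => ?_)
    · have := hKc.measurable
      exact Measurable.aestronglyMeasurable (by fun_prop)
    · rw [norm_mul, Real.norm_of_nonneg (hK0 w), Real.norm_eq_abs]
      exact mul_le_mul_of_nonneg_right (hF _) (hK0 w)
  have hC0 : 0 ≤ C := (hB0 0).trans (hBC 0)
  have hind : Measurable (indicator (Ioi (0 : ℝ)) (fun _ => (1 : ℝ))) :=
    measurable_const.indicator measurableSet_Ioi
  have hie := hi (indicator (Ioi (0 : ℝ)) (fun _ => (1 : ℝ))) hind (fun u => by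
    unfold indicator; split_ifs <;> simp <;> linarith)
  have hiB := hi B hBm (fun u => by rw [abs_of_nonneg (hB0 u)]; linarith [hBC u])
  have e : ∫ u in Ioi (0 : ℝ), (B u - 1) * (l * K (l * (y - u))) =
      ∫ w, (B (y - w / l) - indicator (Ioi (0 : ℝ)) (fun _ => (1 : ℝ)) (y - w / l)) * K w := by
    rw [← hcv (fun u => B u - indicator (Ioi (0 : ℝ)) (fun _ => (1 : ℝ)) u),
      ← integral_indicator measurableSet_Ioi]
    congr 1; ext u
    by_cases hu : 0 < u
    · simp [indicator, hu]
    · simp [indicator, hu, hBneg u (not_lt.mp hu)]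
  rw [e, ← integral_add _ hie]
  · congr 1; ext w; ring
  · simp_rw [sub_mul]
    exact hiB.sub hie

theorem tauberian {B : ℝ → ℝ} {C : ℝ} (hBm : Measurable B) (hB0 : ∀ u, 0 ≤ B u)
    (hBC : ∀ u, B u ≤ C) (hBneg : ∀ u ≤ 0, B u = 0)
    (hmono : Monotone (fun u => B u * Real.exp u))
    {G : ℂ → ℂ} (hG : ContinuousOn G {s | 0 ≤ s.re})
    (hL : ∀ δ : ℝ, 0 < δ → ∀ t : ℝ, ∫ u in Ioi (0 : ℝ),
      ((B u - 1 : ℝ) : ℂ) * Complex.exp (-((δ : ℂ) + t * Complex.I) * u) = G (δ + t * Complex.I)) :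
    Tendsto B atTop (𝓝 1) := by
  obtain ⟨k, K, hk, hkc, hKc, hK, hK0, hK1, hkK⟩ := exists_kernel
  have hC0 : 0 ≤ C := (hB0 0).trans (hBC 0)
  have hstep : ∀ u v : ℝ, u ≤ v → B u * Real.exp (u - v) ≤ B v := by
    intro u v huv
    have := hmono huv
    simp only at this
    rw [Real.exp_sub, ← mul_div_assoc, div_le_iff₀ (Real.exp_pos v)]
    exact this
  have key : ∀ η : ℝ, 0 < η → η < 1 → ∀ᶠ y in atTop,
      B y ≤ Real.exp (2 * η) * ((1 + η) / (1 - η)) ∧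
      Real.exp (-(2 * η)) * (1 - η - C * η) ≤ B y := by
    intro η hη hη1
    -- choose A
    obtain ⟨A, hA, hAJ⟩ : ∃ A : ℝ, 0 < A ∧ 1 - η < ∫ w in Icc (-A) A, K w := by
      have h1 : Tendsto (fun A : ℝ => ∫ w in (-A)..A, K w) atTop (𝓝 (∫ w, K w)) :=
        intervalIntegral_tendsto_integral hK tendsto_neg_atTop_atBot tendsto_id
      rw [hK1] at h1
      obtain ⟨A, h2, h3⟩ := ((h1.eventually (lt_mem_nhds (by linarith : 1 - η < 1))).and
        (eventually_gt_atTop 0)).exists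
      refine ⟨A, h3, ?_⟩
      rw [integral_Icc_eq_integral_Ioc, ← intervalIntegral.integral_of_le (by linarith)]
      exact h2
    set J := ∫ w in Icc (-A) A, K w with hJ
    have hlim := scaled_tendsto hBm hB0 hBC hBneg hG hL hk hkc hKc hK hK0 hK1 hkK
      (l := A / η) (by positivity)
    set H := fun y : ℝ => ∫ w, B (y - w / (A / η)) * K w with hH
    have hIntg : ∀ y : ℝ, Integrable (fun w => B (y - w / (A / η)) * K w) := by
      intro y
      refine (hK.const_mul C).mono' ?_ (Eventually.of_forall fun w => ?_)
      · have := hKc.measurable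
        exact Measurable.aestronglyMeasurable (by fun_prop)
      · rw [norm_mul, Real.norm_of_nonneg (hK0 w), Real.norm_of_nonneg (hB0 _)]
        exact mul_le_mul_of_nonneg_right (hBC _) (hK0 w)
    have hw : ∀ w ∈ Icc (-A) A, |w / (A / η)| ≤ η := by
      intro w hw
      rw [abs_div, abs_of_pos (by positivity : 0 < A / η), div_le_iff₀ (by positivity)]
      have := abs_le.mpr hw
      field_simp
      exact this
    have upper : ∀ y, B (y - η) * Real.exp (-(2 * η)) * J ≤ H y := by
      intro y
      calc B (y - η) * Real.exp (-(2 * η)) * J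
          = ∫ w in Icc (-A) A, B (y - η) * Real.exp (-(2 * η)) * K w := by
            rw [integral_const_mul]
        _ ≤ ∫ w in Icc (-A) A, B (y - w / (A / η)) * K w := by
            apply setIntegral_mono_on (hK.integrableOn.const_mul _) (hIntg y).integrableOn
              measurableSet_Icc
            intro w hw'
            apply mul_le_mul_of_nonneg_right _ (hK0 w)
            have h1 := abs_le.mp (hw w hw')
            refine le_trans ?_ (hstep (y - η) _ (by linarith [h1.2]))
            apply mul_le_mul_of_nonneg_left _ (hB0 _)
            apply Real.exp_le_exp.mpr
            linarith [h1.1]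
        _ ≤ H y := by
            apply setIntegral_le_integral (hIntg y)
            exact Eventually.of_forall fun w => mul_nonneg (hB0 _) (hK0 w)
    have hcompl : ∫ w in (Icc (-A) A)ᶜ, K w = 1 - J := by
      have := integral_add_compl (measurableSet_Icc (a := -A) (b := A)) hK
      rw [hK1] at this
      linarith
    have hJ1 : J ≤ 1 := by
      have : 0 ≤ ∫ w in (Icc (-A) A)ᶜ, K w := integral_nonneg hK0
      linarith
    have lower : ∀ y, H y ≤ B (y + η) * Real.exp (2 * η) + C * η := by
      intro y
      have e := integral_add_compl (measurableSet_Icc (a := -A) (b := A)) (hIntg y)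
      have e1 : ∫ w in Icc (-A) A, B (y - w / (A / η)) * K w ≤
          B (y + η) * Real.exp (2 * η) * J := by
        rw [hJ, ← integral_const_mul]
        apply setIntegral_mono_on (hIntg y).integrableOn (hK.integrableOn.const_mul _)
              measurableSet_Icc
        intro w hw'
        apply mul_le_mul_of_nonneg_right _ (hK0 w)
        have h1 := abs_le.mp (hw w hw')
        have h2 := hstep (y - w / (A / η)) (y + η) (by linarith [h1.1])
        calc B (y - w / (A / η)) = B (y - w / (A / η)) *
              Real.exp (y - w / (A / η) - (y + η)) * Real.exp (-(y - w / (A / η) - (y + η))) := by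
              rw [mul_assoc, ← Real.exp_add, add_neg_cancel, Real.exp_zero, mul_one]
          _ ≤ B (y + η) * Real.exp (2 * η) := by
              apply mul_le_mul h2 _ (Real.exp_pos _).le (hB0 _)
              apply Real.exp_le_exp.mpr
              linarith [h1.2]
      have e2 : ∫ w in (Icc (-A) A)ᶜ, B (y - w / (A / η)) * K w ≤ C * (1 - J) := by
        rw [← hcompl, ← integral_const_mul]
        apply setIntegral_mono_on (hIntg y).integrableOn (hK.integrableOn.const_mul _)
              measurableSet_Icc.compl
        intro w _
        exact mul_le_mul_of_nonneg_right (hBC _) (hK0 w)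
      have e3 : B (y + η) * Real.exp (2 * η) * J ≤ B (y + η) * Real.exp (2 * η) := by
        have : 0 ≤ B (y + η) * Real.exp (2 * η) := mul_nonneg (hB0 _) (Real.exp_pos _).le
        nlinarith
      have e4 : C * (1 - J) ≤ C * η := by gcongr; linarith
      have : H y = ∫ w, B (y - w / (A / η)) * K w := rfl
      linarith
    have hev1 := hlim.eventually (gt_mem_nhds (by linarith : 1 < 1 + η))
    have hev2 := hlim.eventually (lt_mem_nhds (by linarith : 1 - η < 1))
    have t1 : Tendsto (fun y : ℝ => y + η) atTop atTop := tendsto_atTop_add_const_right _ _ tendsto_id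
    have t2 : Tendsto (fun y : ℝ => y - η) atTop atTop := tendsto_atTop_add_const_right _ _ tendsto_id
    filter_upwards [t1.eventually hev1, t2.eventually hev2] with y hy1 hy2
    have u1 := upper (y + η)
    have u2 := lower (y - η)
    change H (y + η) < 1 + η at hy1
    change 1 - η < H (y - η) at hy2
    rw [add_sub_cancel_right] at u1
    rw [sub_add_cancel] at u2
    have hJpos : 0 < 1 - η := by linarith
    have ep : Real.exp (-(2 * η)) * Real.exp (2 * η) = 1 := by rw [← Real.exp_add]; simp
    have ep1 := Real.exp_pos (2 * η)
    have ep2 := Real.exp_pos (-(2 * η))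
    constructor
    · rw [← mul_div_assoc, le_div_iff₀ hJpos]
      have a1 : B y * Real.exp (-(2 * η)) * (1 - η) ≤ 1 + η := by
        have : B y * Real.exp (-(2 * η)) * (1 - η) ≤ B y * Real.exp (-(2 * η)) * J := by
          apply mul_le_mul_of_nonneg_left hAJ.le
          exact mul_nonneg (hB0 _) ep2.le
        linarith
      calc B y * (1 - η) = Real.exp (2 * η) * (B y * Real.exp (-(2 * η)) * (1 - η)) := by
            linear_combination (-(B y * (1 - η))) * ep
        _ ≤ _ := by gcongr
    · have a1 : 1 - η - C * η ≤ B y * Real.exp (2 * η) := by linarith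
      calc _ ≤ Real.exp (-(2 * η)) * (B y * Real.exp (2 * η)) := by gcongr
        _ = B y := by linear_combination (B y) * ep
  rw [tendsto_order]
  constructor
  · intro a ha
    have hc : ContinuousAt (fun η : ℝ => Real.exp (-(2 * η)) * (1 - η - C * η)) 0 := by fun_prop
    have := hc.tendsto.eventually (lt_mem_nhds (by simpa using ha))
    have h2 := (this.filter_mono (nhdsWithin_le_nhds (s := Ioi 0))).and (Ioo_mem_nhdsGT (zero_lt_one (α := ℝ)))
    obtain ⟨η, h3, h4⟩ := h2.exists
    filter_upwards [key η h4.1 h4.2] with y hy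
    exact h3.trans_le hy.2
  · intro a ha
    have hc : ContinuousAt (fun η : ℝ => Real.exp (2 * η) * ((1 + η) / (1 - η))) 0 := by
      apply ContinuousAt.mul (by fun_prop)
      apply ContinuousAt.div (by fun_prop) (by fun_prop) (by norm_num)
    have := hc.tendsto.eventually (gt_mem_nhds (by simpa using ha))
    have h2 := (this.filter_mono (nhdsWithin_le_nhds (s := Ioi 0))).and (Ioo_mem_nhdsGT (zero_lt_one (α := ℝ)))
    obtain ⟨η, h3, h4⟩ := h2.exists
    filter_upwards [key η h4.1 h4.2] with y hy
    exact hy.1.trans_lt h3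

end ICong


namespace ICong

open ArithmeticFunction in
lemma psi_laplace {s : ℂ} (hs : 1 < s.re) :
    ∫ u in Ioi (0 : ℝ), ((Chebyshev.psi (Real.exp u) * Real.exp (-u) : ℝ) : ℂ) *
      Complex.exp (-(s - 1) * u) = LSeries (fun n => (vonMangoldt n : ℂ)) s / s := by
  have hs0 : s ≠ 0 := by rintro rfl; simp at hs; linarith
  have hsum : ∀ n : ℕ, ∑ k ∈ Finset.Icc 1 n, vonMangoldt k = Chebyshev.psi n := by
    intro n
    rw [Chebyshev.psi, Nat.floor_natCast]; rfl
  have hO : (fun n : ℕ => ∑ k ∈ Finset.Icc 1 n, vonMangoldt k) =O[atTop]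
      fun n => (n : ℝ) ^ (1 : ℝ) := by
    apply Asymptotics.IsBigO.of_bound (Real.log 4 + 4)
    refine Eventually.of_forall fun n => ?_
    rw [hsum, Real.norm_of_nonneg (Chebyshev.psi_nonneg _), Real.rpow_one, Real.norm_natCast]
    exact Chebyshev.psi_le_const_mul_self (Nat.cast_nonneg n)
  have h := LSeries_eq_mul_integral_of_nonneg (fun n => vonMangoldt n) (r := 1) zero_le_one hs hO
    (fun n => vonMangoldt_nonneg)
  rw [h, mul_div_cancel_left₀ _ hs0]
  have himg : Real.exp '' Ioi 0 = Ioi 1 := by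
    ext x
    constructor
    · rintro ⟨u, hu, rfl⟩
      exact Real.one_lt_exp_iff.mpr hu
    · intro hx
      exact ⟨Real.log x, Real.log_pos hx, Real.exp_log (by linarith [mem_Ioi.mp hx])⟩
  rw [← himg, integral_image_eq_integral_abs_deriv_smul measurableSet_Ioi
    (fun x _ => (Real.hasDerivAt_exp x).hasDerivWithinAt) Real.exp_injective.injOn]
  apply setIntegral_congr_fun measurableSet_Ioi
  intro u _
  have e1 : ∑ k ∈ Finset.Icc 1 ⌊Real.exp u⌋₊, (vonMangoldt k : ℂ) =
      (Chebyshev.psi (Real.exp u) : ℂ) := by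
    rw [Chebyshev.psi]; push_cast; rfl
  simp only [e1, Complex.real_smul, abs_of_pos (Real.exp_pos u)]
  rw [Complex.cpow_def_of_ne_zero (by exact_mod_cast (Real.exp_pos u).ne'), ← Complex.ofReal_log
    (Real.exp_pos u).le, Real.log_exp]
  push_cast
  have : Complex.exp (-u) * Complex.exp (-(s - 1) * u) =
      Complex.exp u * Complex.exp (u * -(s + 1)) := by
    rw [← Complex.exp_add, ← Complex.exp_add]; congr 1; ring
  linear_combination (Chebyshev.psi (Real.exp u) : ℂ) * this

open ArithmeticFunction ArithmeticFunction.vonMangoldt in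
theorem psi_exp_tendsto :
    Tendsto (fun u : ℝ => Chebyshev.psi (Real.exp u) * Real.exp (-u)) atTop (𝓝 1) := by
  have hres : (fun n => ((residueClass (1 : ZMod 1) n : ℝ) : ℂ)) =
      fun n => (vonMangoldt n : ℂ) := by
    ext n
    congr 1
    unfold residueClass
    apply indicator_of_mem
    exact Subsingleton.elim _ _
  set F := LFunctionResidueClassAux (1 : ZMod 1) with hF
  have hFc : ContinuousOn F {s | 1 ≤ s.re} := continuousOn_LFunctionResidueClassAux _
  have hFe : ∀ s : ℂ, 1 < s.re → F s =
      LSeries (fun n => (vonMangoldt n : ℂ)) s - 1 / (s - 1) := by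
    intro s hs
    have := eqOn_LFunctionResidueClassAux (a := (1 : ZMod 1)) isUnit_one hs
    simp only at this
    rw [hF, this, hres]
    simp
  have hbound : ∀ u : ℝ, Chebyshev.psi (Real.exp u) * Real.exp (-u) ≤ Real.log 4 + 4 := by
    intro u
    have := Chebyshev.psi_le_const_mul_self (Real.exp_pos u).le
    rw [Real.exp_neg, ← div_eq_mul_inv, div_le_iff₀ (Real.exp_pos u)]
    exact this
  have hmeas : Measurable (fun u : ℝ => Chebyshev.psi (Real.exp u) * Real.exp (-u)) := by
    have := Chebyshev.psi_mono.measurable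
    fun_prop
  refine tauberian (C := Real.log 4 + 4) (G := fun z => (F (1 + z) - 1) / (1 + z))
    hmeas (fun u => mul_nonneg (Chebyshev.psi_nonneg _) (Real.exp_pos _).le) hbound ?_ ?_ ?_ ?_
  · intro u hu
    rw [Chebyshev.psi_eq_zero_of_le_one (Real.exp_le_one_iff.mpr hu), zero_mul]
  · intro u v huv
    have : ∀ u : ℝ, Chebyshev.psi (Real.exp u) * Real.exp (-u) * Real.exp u =
        Chebyshev.psi (Real.exp u) := by
      intro u; rw [mul_assoc, ← Real.exp_add]; simp
    simp only [this]
    exact Chebyshev.psi_mono (Real.exp_le_exp.mpr huv)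
  · apply ContinuousOn.div
    · apply ContinuousOn.sub _ continuousOn_const
      refine hFc.comp (by fun_prop) fun z hz => ?_
      simpa using hz
    · fun_prop
    · intro z hz h0
      have := congrArg Complex.re h0
      simp at this hz
      linarith
  · intro δ hδ t
    set z : ℂ := δ + t * Complex.I with hz
    have hzre : z.re = δ := by simp [hz]
    have hz0 : z ≠ 0 := by intro h; rw [h] at hzre; simp at hzre; linarith
    have hz1 : 1 + z ≠ 0 := by
      intro h; have := congrArg Complex.re h; simp [hzre] at this; linarith
    have h1 := psi_laplace (s := 1 + z) (by simp [hzre, hδ])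
    simp only [add_sub_cancel_left] at h1
    have hie : IntegrableOn (fun u : ℝ => Complex.exp (-z * u)) (Ioi 0) :=
      integrableOn_exp_mul_complex_Ioi (by simp [hzre, hδ]) 0
    have h2 : ∫ u in Ioi (0 : ℝ), Complex.exp (-z * u) = 1 / z := by
      rw [integral_exp_mul_complex_Ioi (by simp [hzre, hδ])]
      simp
    have hib : IntegrableOn (fun u : ℝ =>
        ((Chebyshev.psi (Real.exp u) * Real.exp (-u) : ℝ) : ℂ) * Complex.exp (-z * u)) (Ioi 0) := by
      refine hie.bdd_mul (c := Real.log 4 + 4) ?_ ?_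
      · exact (Complex.measurable_ofReal.comp hmeas).aestronglyMeasurable
      · refine Eventually.of_forall fun u => ?_
        rw [Complex.norm_real, Real.norm_of_nonneg
          (mul_nonneg (Chebyshev.psi_nonneg _) (Real.exp_pos _).le)]
        exact hbound u
    have h3 : ∫ u in Ioi (0 : ℝ), ((Chebyshev.psi (Real.exp u) * Real.exp (-u) - 1 : ℝ) : ℂ) *
        Complex.exp (-z * u) = LSeries (fun n => (vonMangoldt n : ℂ)) (1 + z) / (1 + z) - 1 / z := by
      rw [← h1, ← h2, ← integral_sub hib hie]
      congr 1; ext u; push_cast; ring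
    rw [h3, hFe (1 + z) (by simp [hzre, hδ])]
    simp only [add_sub_cancel_left]
    field_simp
    ring

theorem psi_div_tendsto : Tendsto (fun x : ℝ => Chebyshev.psi x / x) atTop (𝓝 1) := by
  refine (psi_exp_tendsto.comp Real.tendsto_log_atTop).congr' ?_
  filter_upwards [eventually_gt_atTop 0] with x hx
  simp only [Function.comp]
  rw [Real.exp_neg, Real.exp_log hx, div_eq_mul_inv]

theorem theta_div_tendsto : Tendsto (fun x : ℝ => Chebyshev.theta x / x) atTop (𝓝 1) := by
  obtain ⟨C, hC⟩ := Chebyshev.psi_sub_theta_le_mul_sqrt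
  have h1 : Tendsto (fun x : ℝ => (Chebyshev.psi x - Chebyshev.theta x) / x) atTop (𝓝 0) := by
    have h2 : Tendsto (fun x : ℝ => C * (√x)⁻¹) atTop (𝓝 (C * 0)) :=
      (tendsto_inv_atTop_zero.comp Real.tendsto_sqrt_atTop).const_mul C
    rw [mul_zero] at h2
    refine tendsto_of_tendsto_of_tendsto_of_le_of_le' tendsto_const_nhds h2 ?_ ?_
    · filter_upwards [eventually_gt_atTop 0] with x hx
      exact div_nonneg (by linarith [Chebyshev.theta_le_psi x]) hx.le
    · filter_upwards [eventually_gt_atTop 0] with x hx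
      rw [div_le_iff₀ hx]
      calc _ ≤ C * √x := hC x
        _ = C * (√x)⁻¹ * x := by
          have : 0 < √x := Real.sqrt_pos.mpr hx
          field_simp
          rw [Real.sq_sqrt hx.le]
  have h3 := psi_div_tendsto.sub h1
  rw [sub_zero] at h3
  refine h3.congr fun x => ?_
  ring

theorem pnt : Tendsto (fun x : ℝ => (Nat.primeCounting ⌊x⌋₊ : ℝ) * Real.log x / x) atTop (𝓝 1) := by
  have h1 : Tendsto (fun x : ℝ => (∫ t in (2 : ℝ)..x, Chebyshev.theta t / (t * Real.log t ^ 2)) /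
      (x / Real.log x)) atTop (𝓝 0) :=
    Chebyshev.integral_theta_div_log_sq_isLittleO.tendsto_div_nhds_zero
  have h2 := theta_div_tendsto.add h1
  rw [add_zero] at h2
  refine h2.congr' ?_
  filter_upwards [eventually_ge_atTop 2] with x hx
  have hl : 0 < Real.log x := Real.log_pos (by linarith)
  rw [Chebyshev.primeCounting_eq_theta_div_log_add_integral hx]
  field_simp

end ICong

namespace ICong

lemma icong_of_odd_divisor {s k : ℕ} (hs : Odd s) (hs1 : 1 < s) (h : s ^ 2 ≤ 4 * k + 1) :
    ICongruent (s * k) := by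
  obtain ⟨r, rfl⟩ := hs
  have hr : 1 ≤ r := by omega
  have hk : r * (r + 1) ≤ k := by nlinarith
  obtain ⟨d, rfl⟩ := Nat.exists_eq_add_of_le hk
  have hpos : 0 < r * (r + 1) := by positivity
  refine ⟨2 * (r * (r + 1)) + d, 2 * r + 1, 2 * (r * (r + 1)) + 1, d, by omega, by omega, by omega,
    by omega, by ring, ?_, ?_⟩
  · rw [Nat.add_sub_cancel]; ring
  · have e : (2 * r + 1) ^ 2 + 1 = 2 * (2 * (r * (r + 1)) + 1) := by ring
    have h1 : (2 * r + 1).gcd (2 * (r * (r + 1)) + 1) ∣ (2 * r + 1) ^ 2 :=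
      (Nat.gcd_dvd_left _ _).trans (Dvd.intro_left (2 * r + 1) (by ring))
    have h2 : (2 * r + 1).gcd (2 * (r * (r + 1)) + 1) ∣ (2 * r + 1) ^ 2 + 1 := by
      rw [e]; exact (Nat.gcd_dvd_right _ _).trans (Dvd.intro_left _ rfl)
    exact Nat.dvd_one.mp ((Nat.dvd_add_right h1).mp h2)

lemma icong_of_even {a m : ℕ} (ha : 1 ≤ a) (hm : Odd m) (h : 4 ^ a ≤ m) :
    ICongruent (2 ^ a * m) := by
  have hev : Even (4 ^ a) := by
    rw [Nat.even_pow]; exact ⟨by decide, by omega⟩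
  obtain ⟨f, hf⟩ := hev
  obtain ⟨g, hg⟩ := hm
  have hfp : 0 < 4 ^ a := by positivity
  have hb : 2 ^ a * 2 ^ a = 4 ^ a := by rw [← mul_pow]; norm_num
  have h2 : 0 < 2 ^ a := by positivity
  -- d = (m - (4^a - 1))/2 = g + 1 - f, a = g + f
  refine ⟨g + f, 2 * 2 ^ a, 4 ^ a + 1, g + 1 - f, by omega, by omega, by omega, by omega, ?_, ?_, ?_⟩
  · have : g + f + (g + 1 - f) = m := by omega
    rw [this]; ring
  · have : g + f - (g + 1 - f) = 4 ^ a - 1 := by omega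
    rw [this]
    obtain ⟨w, hw⟩ : ∃ w, 4 ^ a = w + 1 := ⟨4 ^ a - 1, by omega⟩
    rw [mul_pow, pow_two (2 ^ a), hb, hw]
    simp only [Nat.add_sub_cancel]
    ring
  · have h3 : Nat.Coprime (4 ^ a) (4 ^ a + 1) := by simp
    have h4 : Nat.Coprime (2 * 2 ^ a) (4 ^ a + 1) := by
      have : Nat.Coprime 2 (4 ^ a + 1) := by
        rw [Nat.coprime_two_left]
        exact ⟨f, by omega⟩
      exact Nat.Coprime.mul_left this (this.pow_left a)
    exact h4

lemma odd_nonicong {n : ℕ} (hn : Odd n) (hn1 : 1 < n) (h : ¬ ICongruent n) :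
    n.Prime ∨ ∃ p q : ℕ, p.Prime ∧ q.Prime ∧ p ≤ q ∧ n = p * q ∧ 4 * q < p ^ 2 := by
  have hp : n.minFac.Prime := Nat.minFac_prime (by omega)
  obtain ⟨k, hk⟩ := Nat.minFac_dvd n
  set p := n.minFac with hpdef
  have hodd : Odd p := by
    rw [hk] at hn; exact (Nat.odd_mul.mp hn).1
  have h1 : 4 * k + 1 < p ^ 2 := by
    by_contra! h2
    exact h (hk ▸ icong_of_odd_divisor hodd hp.one_lt h2)
  by_cases hk1 : k = 1
  · left; rw [hk, hk1, mul_one]; exact hp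
  have hk0 : k ≠ 0 := by rintro rfl; omega
  right
  have hkp : k.Prime := by
    by_contra hkn
    have h3 : k.minFac ^ 2 ≤ k := Nat.minFac_sq_le_self (by omega) hkn
    have h4 : p ≤ k.minFac := Nat.minFac_le_of_dvd (Nat.minFac_prime hk1).two_le
      ((Nat.minFac_dvd k).trans (hk ▸ Dvd.intro_left p rfl))
    have : p ^ 2 ≤ k.minFac ^ 2 := Nat.pow_le_pow_left h4 2
    omega
  exact ⟨p, k, hp, hkp, Nat.minFac_le_of_dvd hkp.two_le (hk ▸ Dvd.intro_left p rfl), hk, by omega⟩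

/-- For odd `n`, the height of a trapezoid of area `n` is odd. -/
lemma height_odd {n e b c m : ℕ} (hn : Odd n) (hb : 2 * n = m * b)
    (hpy : e ^ 2 + b ^ 2 = c ^ 2) (hg : Nat.gcd b c = 1) : Odd b := by
  by_contra hbo
  rw [Nat.not_odd_iff_even] at hbo
  have hco : Odd c := by
    by_contra hc
    rw [Nat.not_odd_iff_even] at hc
    have := Nat.dvd_gcd hbo.two_dvd hc.two_dvd
    rw [hg] at this; omega
  have heo : Odd e := by
    by_contra he
    rw [Nat.not_odd_iff_even] at he
    have h1 : Even (e ^ 2 + b ^ 2) := (he.pow_of_ne_zero (by norm_num)).add (hbo.pow_of_ne_zero (by norm_num))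
    rw [hpy] at h1
    exact (Nat.not_even_iff_odd.mpr (hco.pow)) h1
  obtain ⟨b', hb'⟩ := hbo
  have hbo' : Odd b' := by
    by_contra hb2
    rw [Nat.not_odd_iff_even] at hb2
    obtain ⟨b2, rfl⟩ := hb2
    obtain ⟨n', rfl⟩ := hn
    subst hb'
    have : 2 * (2 * n' + 1) = 4 * (m * b2) := by rw [hb]; ring
    omega
  obtain ⟨i, rfl⟩ := hco
  obtain ⟨j, rfl⟩ := heo
  obtain ⟨l, rfl⟩ := hbo'
  subst hb'
  have h1 : Even (i * (i + 1)) := Nat.even_mul_succ_self i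
  have h2 : Even (j * (j + 1)) := Nat.even_mul_succ_self j
  obtain ⟨u, hu⟩ := h1
  obtain ⟨v, hv⟩ := h2
  have h3 : (2 * j + 1) ^ 2 = 8 * v + 1 := by
    have : (2 * j + 1) ^ 2 = 4 * (j * (j + 1)) + 1 := by ring
    omega
  have h4 : (2 * i + 1) ^ 2 = 8 * u + 1 := by
    have : (2 * i + 1) ^ 2 = 4 * (i * (i + 1)) + 1 := by ring
    omega
  have h5 : (2 * l + 1 + (2 * l + 1)) ^ 2 = 16 * (l * (l + 1)) + 4 := by ring
  omega

/-- If the height is a prime then the other leg is determined. -/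
lemma prime_height {e p c : ℕ} (hp : p.Prime) (he : 0 < e)
    (hpy : e ^ 2 + p ^ 2 = c ^ 2) : 2 * e + 1 = p ^ 2 := by
  have hce : e < c := by
    have := hp.pos
    by_contra! h
    have : c ^ 2 ≤ e ^ 2 := Nat.pow_le_pow_left h 2
    have : 0 < p ^ 2 := by positivity
    omega
  obtain ⟨f, rfl⟩ := Nat.exists_eq_add_of_lt hce
  have h1 : p ^ 2 = (f + 1) * (2 * e + f + 1) := by nlinarith
  have h2 : f + 1 ∣ p ^ 2 := Dvd.intro _ h1.symm
  obtain ⟨i, hi, hi2⟩ := (Nat.dvd_prime_pow hp).mp h2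
  have hpp := hp.pos
  interval_cases i
  · simp at hi2
    subst hi2
    rw [h1]; ring
  · have h3 : p = 2 * e + f + 1 := by
      rw [hi2, pow_one] at h1
      rw [pow_two] at h1
      exact Nat.eq_of_mul_eq_mul_left hpp h1
    rw [pow_one] at hi2
    omega
  · have h3 : p ^ 2 * 1 = p ^ 2 * (2 * e + f + 1) := by
      rw [mul_one]; conv_lhs => rw [h1, hi2]
    have := Nat.eq_of_mul_eq_mul_left (by positivity) h3
    omega

lemma full_height {e b c : ℕ} (he : 0 < e) (he2 : e ≤ 2) (hb : 1 ≤ b)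
    (hpy : e ^ 2 + b ^ 2 = c ^ 2) : False := by
  have hcb : b < c := by
    by_contra! h
    have : c ^ 2 ≤ b ^ 2 := Nat.pow_le_pow_left h 2
    have : 0 < e ^ 2 := by positivity
    omega
  obtain ⟨f, rfl⟩ := Nat.exists_eq_add_of_lt hcb
  interval_cases e
  · nlinarith
  · have h1 : 4 = (f + 1) * (2 * b + f + 1) := by nlinarith
    have : f < 2 := by nlinarith
    interval_cases f <;> omega

lemma prime_not_icong {p : ℕ} (hp : p.Prime) (hodd : Odd p) : ¬ ICongruent p := by
  rintro ⟨a, b, c, d, ha, hb, hc, hda, harea, hpy, hg⟩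
  have hbo := height_odd hodd harea hpy hg
  have hbd : b ∣ p := by
    have : b ∣ 2 * p := harea ▸ Dvd.intro_left _ rfl
    exact (Nat.Coprime.dvd_mul_left (Nat.coprime_two_right.mpr hbo)).mp this
  rcases (Nat.dvd_prime hp).mp hbd with rfl | rfl
  · exact full_height hb (by norm_num) (by omega : 1 ≤ a - d) (by rw [add_comm]; exact hpy)
  · have : a + d = 2 := Nat.eq_of_mul_eq_mul_right hb harea.symm
    exact full_height (by omega : 0 < a - d) (by omega) hb hpy

lemma mul_not_icong {p q : ℕ} (hp : p.Prime) (hq : q.Prime) (hpo : Odd p) (hqo : Odd q)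
    (hpq : p < q) (h4 : 4 * q < p ^ 2) : ¬ ICongruent (p * q) := by
  rintro ⟨a, b, c, d, ha, hb, hc, hda, harea, hpy, hg⟩
  have hbo := height_odd (hpo.mul hqo) harea hpy hg
  have hbd : b ∣ p * q := by
    have : b ∣ 2 * (p * q) := harea ▸ Dvd.intro_left _ rfl
    exact (Nat.Coprime.dvd_mul_left (Nat.coprime_two_right.mpr hbo)).mp this
  obtain ⟨b1, b2, hb1, hb2, rfl⟩ := (Nat.dvd_mul).mp hbd
  rcases (Nat.dvd_prime hp).mp hb1 with h5 | h5 <;>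
    rcases (Nat.dvd_prime hq).mp hb2 with h6 | h6 <;> rw [h5, h6] at harea hpy hb <;> clear hg hbo hbd
  · exact full_height hb (by norm_num) (by omega : 1 ≤ a - d) (by rw [add_comm]; exact hpy)
  · rw [one_mul] at harea hpy hb
    have h1 := prime_height hq (by omega) hpy
    have h2 : a + d = 2 * p := Nat.eq_of_mul_eq_mul_right hb (by rw [← harea]; ring)
    have h3 : 2 < p := by
      rcases hp.two_le.lt_or_eq with h | h
      · exact h
      · subst h; revert hpo; decide
    have : q ^ 2 ≤ 4 * p + 1 := by omega
    nlinarith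
  · rw [mul_one] at harea hpy hb
    have h1 := prime_height hp (by omega) hpy
    have h2 : a + d = 2 * q := Nat.eq_of_mul_eq_mul_right hb (by rw [← harea]; ring)
    obtain ⟨r, hr⟩ := hpo
    have h5 : p ^ 2 = 4 * (r * (r + 1)) + 1 := by rw [hr]; ring
    have h6 : q = r * (r + 1) := by omega
    have := Nat.even_mul_succ_self r
    rw [← h6] at this
    exact (Nat.not_even_iff_odd.mpr hqo) this
  · have : a + d = 2 := Nat.eq_of_mul_eq_mul_right hb harea.symm
    exact full_height (by omega : 0 < a - d) (by omega) hb hpy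

end ICong


namespace ICong

/-- Pairs of primes `p < q` with `p q ≤ X` and `4 q < p ^ 2`. -/
def pairSet (X : ℕ) : Finset (ℕ × ℕ) :=
  ((Finset.range (X + 1)) ×ˢ (Finset.range (X + 1))).filter
    fun a => a.1.Prime ∧ a.2.Prime ∧ a.1 < a.2 ∧ a.1 * a.2 ≤ X ∧ 4 * a.2 < a.1 ^ 2

/-- Primes up to `X`. -/
def primesTo (X : ℕ) : Finset ℕ := (Finset.range (X + 1)).filter Nat.Prime

lemma card_primesTo (X : ℕ) : (primesTo X).card = Nat.primeCounting X := by
  unfold primesTo Nat.primeCounting Nat.primeCounting'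
  rw [Nat.count_eq_card_filter_range]

lemma mem_primesTo {X p : ℕ} : p ∈ primesTo X ↔ p ≤ X ∧ p.Prime := by
  unfold primesTo; rw [Finset.mem_filter, Finset.mem_range]; constructor <;> rintro ⟨h, h'⟩ <;> exact ⟨by omega, h'⟩

lemma mem_pairSet {X p q : ℕ} : (p, q) ∈ pairSet X ↔
    p.Prime ∧ q.Prime ∧ p < q ∧ p * q ≤ X ∧ 4 * q < p ^ 2 := by
  unfold pairSet
  simp only [Finset.mem_filter, Finset.mem_product, Finset.mem_range]
  constructor
  · exact fun h => h.2
  · intro h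
    refine ⟨?_, h⟩
    obtain ⟨hp, hq, -, h, -⟩ := h
    have := hp.pos
    have := hq.pos
    constructor <;> nlinarith

open scoped Classical in
lemma count_upper (X J : ℕ) :
    ((Finset.Icc 1 X).filter fun n => ¬ ICongruent n).card ≤
      1 + Nat.primeCounting X + (pairSet X).card + (Nat.sqrt X + 1) + 8 ^ J + X / 2 ^ J := by
  have hsub : ((Finset.Icc 1 X).filter fun n => ¬ ICongruent n) ⊆
      {1} ∪ primesTo X ∪ (pairSet X).image (fun a => a.1 * a.2) ∪
        (Finset.range (Nat.sqrt X + 1)).image (fun p => p * p) ∪ Finset.range (8 ^ J) ∪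
        (Finset.Ioc 0 X).filter (fun n => 2 ^ J ∣ n) := by
    intro n hn
    rw [Finset.mem_filter, Finset.mem_Icc] at hn
    obtain ⟨⟨hn1, hnX⟩, hni⟩ := hn
    simp only [Finset.mem_union, or_assoc]
    rcases Nat.even_or_odd n with he | ho
    · obtain ⟨a, m, hm, rfl⟩ := Nat.exists_eq_two_pow_mul_odd (n := n) (by omega)
      have ha : 1 ≤ a := by
        by_contra! h
        have : a = 0 := by omega
        subst this
        rw [pow_zero, one_mul] at he
        exact (Nat.not_even_iff_odd.mpr hm) he
      have hlt : m < 4 ^ a := by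
        by_contra! h
        exact hni (icong_of_even ha hm h)
      right; right; right; right
      by_cases haJ : a < J
      · left
        rw [Finset.mem_range]
        calc 2 ^ a * m < 2 ^ a * 4 ^ a := by
              apply Nat.mul_lt_mul_of_pos_left hlt; positivity
          _ = 8 ^ a := by rw [← mul_pow]; norm_num
          _ ≤ 8 ^ J := Nat.pow_le_pow_right (by norm_num) haJ.le
      · right
        rw [Finset.mem_filter, Finset.mem_Ioc]
        exact ⟨⟨by omega, hnX⟩, (pow_dvd_pow 2 (by omega)).trans (Dvd.intro _ rfl)⟩
    · rcases Nat.eq_or_lt_of_le hn1 with h1 | h1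
      · left; simp [← h1]
      rcases odd_nonicong ho h1 hni with hp | ⟨p, q, hp, hq, hpq, rfl, h4⟩
      · right; left; exact mem_primesTo.mpr ⟨hnX, hp⟩
      · rcases hpq.eq_or_lt with rfl | hlt
        · right; right; right; left
          refine Finset.mem_image.mpr ⟨p, ?_, rfl⟩
          rw [Finset.mem_range]
          have := Nat.le_sqrt.mpr hnX
          omega
        · right; right; left
          exact Finset.mem_image.mpr ⟨(p, q), mem_pairSet.mpr ⟨hp, hq, hlt, hnX, h4⟩, rfl⟩
  refine (Finset.card_le_card hsub).trans ?_
  refine (Finset.card_union_le _ _).trans (add_le_add ?_ (Nat.Ioc_filter_dvd_card_eq_div _ _).le)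
  refine (Finset.card_union_le _ _).trans (add_le_add ?_ (Finset.card_range _).le)
  refine (Finset.card_union_le _ _).trans (add_le_add ?_ (Finset.card_image_le.trans (Finset.card_range _).le))
  refine (Finset.card_union_le _ _).trans (add_le_add ?_ Finset.card_image_le)
  refine (Finset.card_union_le _ _).trans (add_le_add ?_ (card_primesTo X).le)
  simp

lemma pair_injOn (X : ℕ) : Set.InjOn (fun a : ℕ × ℕ => a.1 * a.2) (pairSet X) := by
  rintro ⟨p, q⟩ h ⟨p', q'⟩ h' heq
  rw [Finset.mem_coe, mem_pairSet] at h h'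
  obtain ⟨hp, hq, hpq, -, -⟩ := h
  obtain ⟨hp', hq', hpq', -, -⟩ := h'
  simp only at heq
  have h1 : p ∣ p' * q' := heq ▸ Dvd.intro _ rfl
  rcases (Nat.Prime.dvd_mul hp).mp h1 with h | h
  · have := (Nat.prime_dvd_prime_iff_eq hp hp').mp h
    subst this
    have := Nat.eq_of_mul_eq_mul_left hp.pos heq
    subst this; rfl
  · have := (Nat.prime_dvd_prime_iff_eq hp hq').mp h
    subst this
    have := Nat.eq_of_mul_eq_mul_left hp.pos (heq.trans (mul_comm _ _))
    omega

open scoped Classical in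
lemma count_lower (X : ℕ) :
    Nat.primeCounting X + (pairSet X).card ≤
    ((Finset.Icc 1 X).filter fun n => ¬ ICongruent n).card + 1 := by
  have hsub : (primesTo X).erase 2 ∪ (pairSet X).image (fun a => a.1 * a.2) ⊆
      (Finset.Icc 1 X).filter fun n => ¬ ICongruent n := by
    intro n hn
    rw [Finset.mem_filter, Finset.mem_Icc]
    rw [Finset.mem_union] at hn
    rcases hn with hn | hn
    · rw [Finset.mem_erase, mem_primesTo] at hn
      obtain ⟨h2, hX, hp⟩ := hn
      exact ⟨⟨hp.pos, hX⟩, prime_not_icong hp (hp.odd_of_ne_two h2)⟩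
    · obtain ⟨⟨p, q⟩, h, rfl⟩ := Finset.mem_image.mp hn
      obtain ⟨hp, hq, hpq, hX, h4⟩ := mem_pairSet.mp h
      have := hp.two_le
      have hp2 : p ≠ 2 := by rintro rfl; omega
      refine ⟨⟨Nat.mul_pos hp.pos hq.pos, hX⟩, mul_not_icong hp hq (hp.odd_of_ne_two hp2) (hq.odd_of_ne_two (by omega)) hpq h4⟩
  have hdis : Disjoint ((primesTo X).erase 2) ((pairSet X).image (fun a => a.1 * a.2)) := by
    rw [Finset.disjoint_left]
    intro n hn hn'
    rw [Finset.mem_erase, mem_primesTo] at hn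
    obtain ⟨⟨p, q⟩, h, rfl⟩ := Finset.mem_image.mp hn'
    obtain ⟨hp, hq, -⟩ := mem_pairSet.mp h
    exact Nat.not_prime_mul hp.one_lt.ne' hq.one_lt.ne' hn.2.2
  have h := Finset.card_le_card hsub
  rw [Finset.card_union_of_disjoint hdis, Finset.card_image_of_injOn (pair_injOn X)] at h
  have h2 : (primesTo X).card ≤ ((primesTo X).erase 2).card + 1 := by
    have := Finset.pred_card_le_card_erase (s := primesTo X) (a := 2)
    omega
  rw [card_primesTo] at h2
  omega

/-- The main sum. -/
def mainSum (X Y Z : ℕ) : ℕ := ∑ p ∈ (Finset.Ioc Y Z).filter Nat.Prime, Nat.primeCounting (X / p)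

/-- pairs counted by `mainSum` -/
lemma mainSum_eq (X Y Z : ℕ) : mainSum X Y Z =
    (((Finset.Ioc Y Z).filter Nat.Prime).sigma (fun p => primesTo (X / p))).card := by
  rw [Finset.card_sigma]
  exact Finset.sum_congr rfl fun p _ => (card_primesTo _).symm

lemma pair_le_main (X Y Z : ℕ) (hZ : X < (Z + 1) ^ 2) :
    (pairSet X).card ≤ Nat.primeCounting Y * Nat.primeCounting (Y ^ 2) + mainSum X Y Z := by
  rw [mainSum_eq]
  have : (pairSet X) ⊆ (primesTo Y ×ˢ primesTo (Y ^ 2)) ∪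
     (((Finset.Ioc Y Z).filter Nat.Prime).sigma (fun p => primesTo (X / p))).image
       (fun a => (a.1, a.2)) := by
    rintro ⟨p, q⟩ h
    obtain ⟨hp, hq, hpq, hX, h4⟩ := mem_pairSet.mp h
    rw [Finset.mem_union]
    by_cases hY : p ≤ Y
    · left
      rw [Finset.mem_product, mem_primesTo, mem_primesTo]
      have : p ^ 2 ≤ Y ^ 2 := Nat.pow_le_pow_left hY 2
      exact ⟨⟨hY, hp⟩, by omega, hq⟩
    · right
      refine Finset.mem_image.mpr ⟨⟨p, q⟩, ?_, rfl⟩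
      rw [Finset.mem_sigma, Finset.mem_filter, Finset.mem_Ioc, mem_primesTo]
      refine ⟨⟨⟨not_le.mp hY, ?_⟩, hp⟩, ?_, hq⟩
      · by_contra! h
        have : (Z + 1) ^ 2 ≤ p ^ 2 := Nat.pow_le_pow_left h 2
        nlinarith
      · rw [Nat.le_div_iff_mul_le hp.pos]; rw [mul_comm]; exact hX
  refine (Finset.card_le_card this).trans ((Finset.card_union_le _ _).trans ?_)
  rw [Finset.card_product, card_primesTo, card_primesTo]
  exact add_le_add le_rfl Finset.card_image_le

lemma main_le_pair (X Y Z : ℕ) (hY : X < (Y + 1) ^ 3) :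
    mainSum X Y Z ≤ (pairSet X).card + Nat.primeCounting (2 * Y + 2) * Nat.primeCounting ((Y + 1) ^ 2)
      + Nat.primeCounting Z * Nat.primeCounting Z := by
  rw [mainSum_eq]
  have hsub : (((Finset.Ioc Y Z).filter Nat.Prime).sigma (fun p => primesTo (X / p))).image
       (fun a => (a.1, a.2)) ⊆ pairSet X ∪ (primesTo (2 * Y + 2) ×ˢ primesTo ((Y + 1) ^ 2)) ∪
       (primesTo Z ×ˢ primesTo Z) := by
    intro a ha
    obtain ⟨⟨p, q⟩, h, rfl⟩ := Finset.mem_image.mp ha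
    rw [Finset.mem_sigma, Finset.mem_filter, Finset.mem_Ioc, mem_primesTo] at h
    obtain ⟨⟨⟨h1, h2⟩, hp⟩, h3, hq⟩ := h
    simp only at h1 h2 hp h3 hq
    rw [Nat.le_div_iff_mul_le hp.pos] at h3
    simp only [Finset.mem_union, Finset.mem_product, mem_primesTo, mem_pairSet]
    by_cases hqp : q ≤ p
    · right; exact ⟨⟨h2, hp⟩, by omega, hq⟩
    left
    by_cases hpY : p ≤ 2 * Y + 2
    · right
      refine ⟨⟨hpY, hp⟩, ?_, hq⟩
      by_contra! h
      have : (Y + 1) ^ 2 * (Y + 1) ≤ q * p := Nat.mul_le_mul h.le h1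
      nlinarith
    · left
      push Not at hqp hpY
      refine ⟨hp, hq, hqp, by linarith, ?_⟩
      by_contra! h
      have h5 : p ^ 2 * p ≤ 4 * q * p := Nat.mul_le_mul_right _ h
      have h6 : (2 * (Y + 1)) ^ 3 ≤ p ^ 3 := Nat.pow_le_pow_left (by omega) 3
      have h7 : (2 * (Y + 1)) ^ 3 = 8 * (Y + 1) ^ 3 := by ring
      have h8 : p ^ 2 * p = p ^ 3 := by ring
      have h9 : 4 * q * p = 4 * (q * p) := by ring
      omega
  have hinj : Set.InjOn (fun a : (_ : ℕ) × ℕ => (a.1, a.2))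
      (((Finset.Ioc Y Z).filter Nat.Prime).sigma (fun p => primesTo (X / p))) := by
    rintro ⟨a, b⟩ _ ⟨c, d⟩ _ h
    simp only [Prod.mk.injEq] at h
    obtain ⟨rfl, rfl⟩ := h
    rfl
  rw [← Finset.card_image_of_injOn hinj]
  refine (Finset.card_le_card hsub).trans ((Finset.card_union_le _ _).trans ?_)
  refine add_le_add ((Finset.card_union_le _ _).trans ?_) ?_
  · rw [Finset.card_product, card_primesTo, card_primesTo]
  · rw [Finset.card_product, card_primesTo]

end ICong


namespace ICong

lemma abel_bound {g g' : ℝ → ℝ} {y z ε : ℝ} (hy : 0 < y) (hyz : y ≤ z)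
    (hd : ∀ t ∈ Icc y z, HasDerivAt g (g' t) t) (hc : ContinuousOn g' (Icc y z))
    (hneg : ∀ t ∈ Icc y z, g' t ≤ 0) (hgy : 0 ≤ g y) (hgz : 0 ≤ g z)
    (hθ : ∀ t ∈ Icc y z, |Chebyshev.theta t - t| ≤ ε * t) :
    |∑ p ∈ (Finset.Ioc ⌊y⌋₊ ⌊z⌋₊).filter Nat.Prime, g p * Real.log p - ∫ t in y..z, g t| ≤
      ε * (2 * (y * g y) + ∫ t in y..z, g t) := by
  set c : ℕ → ℝ := fun n => if n.Prime then Real.log n else 0 with hcdef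
  have hth : ∀ t : ℝ, ∑ k ∈ Finset.Icc 0 ⌊t⌋₊, c k = Chebyshev.theta t := by
    intro t
    rw [Chebyshev.theta_eq_sum_Icc, Finset.sum_filter]
  have hder : ∀ t ∈ Icc y z, deriv g t = g' t := fun t ht => (hd t ht).deriv
  have hdint : IntegrableOn (deriv g) (Icc y z) :=
    (hc.congr fun t ht => hder t ht).integrableOn_Icc
  have hA := sum_mul_eq_sub_sub_integral_mul c hy.le hyz
    (fun t ht => (hd t ht).differentiableAt) hdint
  have hI := integrableOn_mul_sum_Icc (m := 0) c hy.le hdint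
  simp only [hth] at hA hI
  have hsum : ∑ p ∈ (Finset.Ioc ⌊y⌋₊ ⌊z⌋₊).filter Nat.Prime, g p * Real.log p =
      ∑ k ∈ Finset.Ioc ⌊y⌋₊ ⌊z⌋₊, g k * c k := by
    rw [Finset.sum_filter]
    refine Finset.sum_congr rfl fun p _ => ?_
    simp only [hcdef]
    split_ifs <;> simp
  have hu : uIcc y z = Icc y z := uIcc_of_le hyz
  have hgi : IntervalIntegrable g volume y z := by
    apply ContinuousOn.intervalIntegrable
    rw [hu]; exact fun t ht => (hd t ht).continuousAt.continuousWithinAt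
  have hgi' : IntervalIntegrable g' volume y z := by
    apply ContinuousOn.intervalIntegrable
    rw [hu]; exact hc
  have hgit : IntervalIntegrable (fun t => g' t * t) volume y z := by
    apply ContinuousOn.intervalIntegrable
    rw [hu]; exact hc.mul continuousOn_id
  have hparts : ∫ t in y..z, g t = g z * z - g y * y - ∫ t in y..z, g' t * t := by
    have := intervalIntegral.integral_mul_deriv_eq_deriv_mul (u := g) (v := fun t => t) (u' := g')
      (v' := fun _ => 1) (a := y) (b := z) (by rw [hu]; exact hd) (fun t _ => hasDerivAt_id t) hgi' (by simp)
    simpa using this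
  have hIt : IntervalIntegrable (fun t => g' t * Chebyshev.theta t) volume y z := by
    rw [intervalIntegrable_iff_integrableOn_Icc_of_le hyz]
    exact hI.congr_fun (fun t ht => by simp only [hder t ht]) measurableSet_Icc
  have hIntg : ∫ t in Ioc y z, deriv g t * Chebyshev.theta t = ∫ t in y..z, g' t * Chebyshev.theta t := by
    rw [intervalIntegral.integral_of_le hyz]
    exact setIntegral_congr_fun measurableSet_Ioc fun t ht => by simp only [hder t (Ioc_subset_Icc_self ht)]
  have hb : |∫ t in y..z, (g' t * Chebyshev.theta t - g' t * t)| ≤ ∫ t in y..z, -(ε * (g' t * t)) := by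
    rw [← Real.norm_eq_abs]
    refine intervalIntegral.norm_integral_le_of_norm_le hyz (.of_forall fun t ht => ?_) (hgit.const_mul ε).neg
    have ht' := Ioc_subset_Icc_self ht
    rw [← mul_sub, Real.norm_eq_abs, abs_mul, abs_of_nonpos (hneg t ht')]
    have := hθ t ht'
    have h2 := hneg t ht'
    nlinarith
  rw [intervalIntegral.integral_sub hIt hgit, intervalIntegral.integral_neg, intervalIntegral.integral_const_mul] at hb
  rw [hsum, hA, hIntg]
  have hy' := abs_le.mp (hθ y (left_mem_Icc.mpr hyz))
  have hz' := abs_le.mp (hθ z (right_mem_Icc.mpr hyz))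
  have hb' := abs_le.mp hb
  have e1 := mul_le_mul_of_nonneg_left hy'.1 hgy
  have e2 := mul_le_mul_of_nonneg_left hy'.2 hgy
  have e3 := mul_le_mul_of_nonneg_left hz'.1 hgz
  have e4 := mul_le_mul_of_nonneg_left hz'.2 hgz
  rw [abs_le]
  rw [hparts]
  constructor <;> nlinarith

/-- The density function. -/
noncomputable def gg (L t : ℝ) : ℝ := (t * (Real.log t * (L - Real.log t)))⁻¹

lemma gg_range {L t : ℝ} (hL : 0 < L) (ht : t ∈ Icc (Real.exp (L / 3)) (Real.exp (L / 2))) :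
    0 < t ∧ L / 3 ≤ Real.log t ∧ Real.log t ≤ L / 2 := by
  have h0 : 0 < t := (Real.exp_pos _).trans_le ht.1
  exact ⟨h0, (Real.le_log_iff_exp_le h0).mpr ht.1, (Real.log_le_iff_le_exp h0).mpr ht.2⟩

lemma integral_gg {L : ℝ} (hL : 0 < L) :
    ∫ t in (Real.exp (L / 3))..(Real.exp (L / 2)), gg L t = Real.log 2 / L := by
  have hle : Real.exp (L / 3) ≤ Real.exp (L / 2) := Real.exp_le_exp.mpr (by linarith)
  have hu := uIcc_of_le hle
  rw [intervalIntegral.integral_eq_sub_of_hasDerivAt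
    (f := fun t => (1 / L) * (Real.log (Real.log t) - Real.log (L - Real.log t)))]
  · simp only [Real.log_exp]
    have e1 : L - L / 2 = L / 2 := by ring
    have e2 : L - L / 3 = 2 * (L / 3) := by ring
    rw [e1, e2, Real.log_mul (by norm_num) (by positivity)]
    field_simp
    ring
  · intro t ht
    rw [hu] at ht
    obtain ⟨h0, h1, h2⟩ := gg_range hL ht
    have h3 : Real.log t ≠ 0 := by linarith
    have h4 : L - Real.log t ≠ 0 := by linarith
    have hl := Real.hasDerivAt_log h0.ne'
    refine (((hl.log h3).sub ((hl.const_sub L).log h4)).const_mul (1 / L)).congr_deriv ?_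
    unfold gg
    field_simp
    ring
  · apply ContinuousOn.intervalIntegrable
    rw [hu]
    intro t ht
    obtain ⟨h0, h1, h2⟩ := gg_range hL ht
    apply ContinuousAt.continuousWithinAt
    unfold gg
    have h3 : Real.log t ≠ 0 := by linarith
    have h4 : L - Real.log t ≠ 0 := by linarith
    have h5 : t * (Real.log t * (L - Real.log t)) ≠ 0 := by
      have := h0.ne'
      positivity
    have := h0.ne'
    fun_prop (disch := assumption)

lemma sum_gg {L ε : ℝ} (hL : 1 ≤ L) (hε : 0 < ε)
    (hθ : ∀ t : ℝ, Real.exp (L / 3) ≤ t → |Chebyshev.theta t - t| ≤ ε * t) :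
    |∑ p ∈ (Finset.Ioc ⌊Real.exp (L / 3)⌋₊ ⌊Real.exp (L / 2)⌋₊).filter Nat.Prime,
        gg L p * Real.log p - Real.log 2 / L| ≤ 10 * ε / L := by
  have hL0 : 0 < L := by linarith
  have hle : Real.exp (L / 3) ≤ Real.exp (L / 2) := Real.exp_le_exp.mpr (by linarith)
  have key := abel_bound (g := gg L) (g' := fun t => -(Real.log t * (L - Real.log t) + (L - 2 * Real.log t)) /
    (t * (Real.log t * (L - Real.log t))) ^ 2) (Real.exp_pos _) hle ?_ ?_ ?_ ?_ ?_ (fun t ht => hθ t ht.1)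
  · rw [integral_gg hL0] at key
    refine key.trans ?_
    have : Real.exp (L / 3) * gg L (Real.exp (L / 3)) = 9 / 2 / L ^ 2 := by
      unfold gg; rw [Real.log_exp]
      have := (Real.exp_pos (L / 3)).ne'
      field_simp
      ring
    rw [this]
    have h2 : 9 / 2 / L ^ 2 ≤ 9 / 2 / L := by
      apply div_le_div_of_nonneg_left (by norm_num) hL0
      nlinarith
    have h3 : Real.log 2 / L ≤ 1 / L := by
      apply div_le_div_of_nonneg_right _ hL0.le
      have := Real.log_two_lt_d9; linarith
    have e : 10 * ε / L = ε * (2 * (9 / 2 / L) + 1 / L) := by ring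
    rw [e]
    gcongr
  · intro t ht
    obtain ⟨h0, h1, h2⟩ := gg_range hL0 ht
    have h3 : Real.log t ≠ 0 := by linarith
    have h4 : L - Real.log t ≠ 0 := by linarith
    have hl := Real.hasDerivAt_log h0.ne'
    have h5 : t * (Real.log t * (L - Real.log t)) ≠ 0 := by
      have := h0.ne'
      positivity
    refine (((hasDerivAt_id t).mul (hl.mul (hl.const_sub L))).inv h5).congr_deriv ?_
    simp only [id, Pi.mul_apply]
    congr 2
    field_simp
    ring
  · intro t ht
    obtain ⟨h0, h1, h2⟩ := gg_range hL0 ht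
    apply ContinuousAt.continuousWithinAt
    have h3 : Real.log t ≠ 0 := by linarith
    have h4 : L - Real.log t ≠ 0 := by linarith
    have h5 : (t * (Real.log t * (L - Real.log t))) ^ 2 ≠ 0 := by
      have := h0.ne'
      positivity
    have := h0.ne'
    fun_prop (disch := assumption)
  · intro t ht
    obtain ⟨h0, h1, h2⟩ := gg_range hL0 ht
    apply div_nonpos_of_nonpos_of_nonneg
    · have : 0 ≤ Real.log t * (L - Real.log t) := mul_nonneg (by linarith) (by linarith)
      linarith
    · positivity
  all_goals
    unfold gg
    rw [Real.log_exp]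
    apply inv_nonneg.mpr
    apply mul_nonneg (Real.exp_pos _).le
    apply mul_nonneg <;> linarith

end ICong


namespace ICong

/-- The main sum with `X = exp L`. -/
noncomputable def mm (L : ℝ) : ℕ :=
  mainSum ⌊Real.exp L⌋₊ ⌊Real.exp (L / 3)⌋₊ ⌊Real.exp (L / 2)⌋₊

lemma main_bound {L ε : ℝ} (hL : 1 ≤ L) (hε : 0 < ε) (hε1 : ε ≤ 1)
    (hθ : ∀ t : ℝ, Real.exp (L / 3) ≤ t → |Chebyshev.theta t - t| ≤ ε * t)
    (hπ : ∀ w : ℝ, Real.exp (L / 2) ≤ w → |(Nat.primeCounting ⌊w⌋₊ : ℝ) * Real.log w / w - 1| ≤ ε) :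
    |(mm L : ℝ) * L / Real.exp L - Real.log 2| ≤ 21 * ε := by
  have hL0 : 0 < L := by linarith
  have hS := sum_gg hL hε hθ
  set s := (Finset.Ioc ⌊Real.exp (L / 3)⌋₊ ⌊Real.exp (L / 2)⌋₊).filter Nat.Prime with hs
  set S := ∑ p ∈ s, gg L p * Real.log p with hSdef
  have hx := Real.exp_pos L
  have hM : |(mm L : ℝ) - Real.exp L * S| ≤ ε * (Real.exp L * S) := by
    unfold mm mainSum
    push_cast
    rw [hSdef, Finset.mul_sum, Finset.mul_sum, ← Finset.sum_sub_distrib]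
    refine (Finset.abs_sum_le_sum_abs _ _).trans (Finset.sum_le_sum fun p hp => ?_)
    rw [Finset.mem_filter, Finset.mem_Ioc] at hp
    obtain ⟨⟨h1, h2⟩, hpp⟩ := hp
    have hp0 : (0 : ℝ) < p := by exact_mod_cast hpp.pos
    have hp1 : (1 : ℝ) < p := by exact_mod_cast hpp.one_lt
    have hpl : 0 < Real.log p := Real.log_pos hp1
    have hple : (p : ℝ) ≤ Real.exp (L / 2) := (Nat.le_floor_iff (Real.exp_pos _).le).mp h2
    have hpl2 : Real.log p ≤ L / 2 := (Real.log_le_iff_le_exp hp0).mpr hple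
    have hw : Real.exp (L / 2) ≤ Real.exp L / p := by
      rw [le_div_iff₀ hp0]
      calc Real.exp (L / 2) * p ≤ Real.exp (L / 2) * Real.exp (L / 2) := by gcongr
        _ = Real.exp L := by rw [← Real.exp_add]; congr 1; ring
    have hlw : Real.log (Real.exp L / p) = L - Real.log p := by
      rw [Real.log_div hx.ne' hp0.ne', Real.log_exp]
    have h5 := hπ _ hw
    rw [← Nat.floor_div_natCast]
    rw [hlw] at h5
    have h6 : 0 < L - Real.log p := by linarith
    have hv : Real.exp L * (gg L p * Real.log p) = (Real.exp L / p) / (L - Real.log p) := by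
      unfold gg; field_simp
    rw [hv]
    set w := Real.exp L / p
    have hw0 : 0 < w := by positivity
    have e : (Nat.primeCounting ⌊w⌋₊ : ℝ) - w / (L - Real.log p) =
      ((Nat.primeCounting ⌊w⌋₊ : ℝ) * (L - Real.log p) / w - 1) * (w / (L - Real.log p)) := by
      field_simp
    rw [e, abs_mul, abs_of_pos (by positivity : 0 < w / (L - Real.log p))]
    gcongr
  have e : (mm L : ℝ) * L / Real.exp L - Real.log 2 =
      ((mm L : ℝ) - Real.exp L * S) * (L / Real.exp L) + (S - Real.log 2 / L) * L := by
    field_simp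
    ring
  rw [e]
  have hl2 : Real.log 2 ≤ 1 := by have := Real.log_two_lt_d9; linarith
  have b2 : |(S - Real.log 2 / L) * L| ≤ 10 * ε := by
    rw [abs_mul, abs_of_pos hL0]
    calc _ ≤ 10 * ε / L * L := by gcongr
      _ = 10 * ε := by field_simp
  have hSL : S * L ≤ 11 := by
    have := (abs_le.mp b2).2
    have h3 : (S - Real.log 2 / L) * L = S * L - Real.log 2 := by field_simp
    rw [h3] at this
    linarith
  have b1 : |((mm L : ℝ) - Real.exp L * S) * (L / Real.exp L)| ≤ 11 * ε := by
    rw [abs_mul, abs_of_pos (by positivity : 0 < L / Real.exp L)]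
    calc _ ≤ ε * (Real.exp L * S) * (L / Real.exp L) := by gcongr
      _ = ε * (S * L) := by field_simp
      _ ≤ ε * 11 := by gcongr
      _ = 11 * ε := by ring
  exact (abs_add_le _ _).trans (by linarith)

lemma mm_tendsto : Tendsto (fun L : ℝ => (mm L : ℝ) * L / Real.exp L) atTop (𝓝 (Real.log 2)) := by
  rw [Metric.tendsto_nhds]
  intro δ hδ
  set ε := min 1 (δ / 22) with hεdef
  have hε : 0 < ε := by positivity
  have h1 := (Metric.tendsto_nhds.mp theta_div_tendsto) ε hε
  have h2 := (Metric.tendsto_nhds.mp pnt) ε hε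
  rw [eventually_atTop] at h1 h2
  obtain ⟨a, ha⟩ := h1
  obtain ⟨b, hb⟩ := h2
  have t3 : Tendsto (fun L : ℝ => Real.exp (L / 3)) atTop atTop :=
    Real.tendsto_exp_atTop.comp (tendsto_id.atTop_div_const (by norm_num))
  have t2 : Tendsto (fun L : ℝ => Real.exp (L / 2)) atTop atTop :=
    Real.tendsto_exp_atTop.comp (tendsto_id.atTop_div_const (by norm_num))
  filter_upwards [t3.eventually_ge_atTop a, t2.eventually_ge_atTop b, eventually_ge_atTop 1] with L hLa hLb hL
  rw [Real.dist_eq]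
  refine (main_bound hL hε (min_le_left _ _) ?_ ?_).trans_lt ?_
  · intro t ht
    have := ha t (hLa.trans ht)
    rw [Real.dist_eq] at this
    have ht0 : 0 < t := (Real.exp_pos _).trans_le ht
    have e : Chebyshev.theta t - t = (Chebyshev.theta t / t - 1) * t := by field_simp
    rw [e, abs_mul, abs_of_pos ht0]
    gcongr
  · intro w hw
    have := hb w (hLb.trans hw)
    rw [Real.dist_eq] at this
    exact this.le
  · have : ε ≤ δ / 22 := min_le_right _ _
    linarith

lemma pi_le_eventually : ∃ b : ℝ, 1 ≤ b ∧ ∀ w : ℝ, b ≤ w →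
    (Nat.primeCounting ⌊w⌋₊ : ℝ) * Real.log w ≤ 2 * w := by
  have h := pnt.eventually_lt_const (by norm_num : (1 : ℝ) < 2)
  rw [eventually_atTop] at h
  obtain ⟨b, hb⟩ := h
  refine ⟨max b 1, le_max_right _ _, fun w hw => ?_⟩
  have hw0 : 0 < w := by linarith [le_max_right b 1]
  have := hb w ((le_max_left _ _).trans hw)
  rw [div_lt_iff₀ hw0] at this
  exact this.le

lemma pi_bound {n : ℕ} {b w l : ℝ} (hb1 : 1 ≤ b)
    (hb : ∀ w : ℝ, b ≤ w → (Nat.primeCounting ⌊w⌋₊ : ℝ) * Real.log w ≤ 2 * w)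
    (hw : b ≤ w) (hn : (n : ℝ) ≤ w) (hl : l ≤ Real.log w) :
    (Nat.primeCounting n : ℝ) * l ≤ 2 * w := by
  have h1 : n ≤ ⌊w⌋₊ := Nat.le_floor hn
  have h2 : (Nat.primeCounting n : ℝ) ≤ Nat.primeCounting ⌊w⌋₊ := by
    exact_mod_cast Nat.monotone_primeCounting h1
  calc (Nat.primeCounting n : ℝ) * l ≤ (Nat.primeCounting n : ℝ) * Real.log w := by gcongr
    _ ≤ (Nat.primeCounting ⌊w⌋₊ : ℝ) * Real.log w := by
        have : 0 ≤ Real.log w := Real.log_nonneg (by linarith)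
        gcongr
    _ ≤ _ := hb w hw

set_option maxHeartbeats 1000000 in
lemma count_bound {b L : ℝ} (hb1 : 1 ≤ b)
    (hb : ∀ w : ℝ, b ≤ w → (Nat.primeCounting ⌊w⌋₊ : ℝ) * Real.log w ≤ 2 * w)
    (hL : 1 ≤ L) (hLb : b ≤ Real.exp (L / 3)) :
    |(nonICongruentCount (Real.exp L) : ℝ) - Nat.primeCounting ⌊Real.exp L⌋₊ - mm L| ≤
      6 * Real.exp (3 * L / 4) + 592 * Real.exp L / L ^ 2 := by
  have hL0 : 0 < L := by linarith
  set X := ⌊Real.exp L⌋₊ with hX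
  set Y := ⌊Real.exp (L / 3)⌋₊ with hY
  set Z := ⌊Real.exp (L / 2)⌋₊ with hZ
  have hXle : (X : ℝ) ≤ Real.exp L := Nat.floor_le (Real.exp_pos _).le
  have hYle : (Y : ℝ) ≤ Real.exp (L / 3) := Nat.floor_le (Real.exp_pos _).le
  have hZle : (Z : ℝ) ≤ Real.exp (L / 2) := Nat.floor_le (Real.exp_pos _).le
  have hYlt : Real.exp (L / 3) < Y + 1 := Nat.lt_floor_add_one _
  have hZlt : Real.exp (L / 2) < Z + 1 := Nat.lt_floor_add_one _
  have e3 : Real.exp (L / 3) ^ 3 = Real.exp L := by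
    rw [← Real.exp_nat_mul]; congr 1; push_cast; ring
  have e2 : Real.exp (L / 2) ^ 2 = Real.exp L := by
    rw [← Real.exp_nat_mul]; congr 1; push_cast; ring
  have hX3 : X < (Y + 1) ^ 3 := by
    have : (X : ℝ) < (Y + 1) ^ 3 := by
      refine hXle.trans_lt ?_
      rw [← e3]; gcongr
    exact_mod_cast this
  have hX2 : X < (Z + 1) ^ 2 := by
    have : (X : ℝ) < (Z + 1) ^ 2 := by
      refine hXle.trans_lt ?_
      rw [← e2]; gcongr
    exact_mod_cast this
  have hy1 : 1 ≤ Real.exp (L / 3) := Real.one_le_exp (by linarith)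
  set y := Real.exp (L / 3) with hydef
  have hlogy : Real.log y = L / 3 := Real.log_exp _
  have hy2 : y ≤ y ^ 2 := by nlinarith
  -- prime counting bounds
  have p1 : (Nat.primeCounting (2 * Y + 2) : ℝ) * (L / 3) ≤ 2 * (4 * y) := by
    apply pi_bound hb1 hb (by linarith)
    · push_cast; linarith
    · rw [← hlogy]; exact Real.log_le_log (by linarith) (by linarith)
  have p2 : (Nat.primeCounting ((Y + 1) ^ 2) : ℝ) * (L / 3) ≤ 2 * (4 * y ^ 2) := by
    apply pi_bound hb1 hb (by nlinarith)
    · push_cast; nlinarith [Nat.cast_nonneg (α := ℝ) Y]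
    · rw [← hlogy]; exact Real.log_le_log (by linarith) (by linarith)
  have p3 : (Nat.primeCounting Z : ℝ) * (L / 2) ≤ 2 * Real.exp (L / 2) := by
    apply pi_bound hb1 hb (hLb.trans (Real.exp_le_exp.mpr (by linarith))) hZle
    rw [Real.log_exp]
  have q1 : (Nat.primeCounting (2 * Y + 2) : ℝ) * Nat.primeCounting ((Y + 1) ^ 2) ≤
      576 * Real.exp L / L ^ 2 := by
    rw [le_div_iff₀ (by positivity)]
    have := mul_le_mul p1 p2 (by positivity) (by positivity)
    have e : 2 * (4 * y) * (2 * (4 * y ^ 2)) = 64 * Real.exp L := by rw [← e3]; ring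
    rw [e] at this
    linarith
  have q2 : (Nat.primeCounting Z : ℝ) * Nat.primeCounting Z ≤ 16 * Real.exp L / L ^ 2 := by
    rw [le_div_iff₀ (by positivity)]
    have := mul_le_mul p3 p3 (by positivity) (by positivity)
    have e : 2 * Real.exp (L / 2) * (2 * Real.exp (L / 2)) = 4 * Real.exp L := by rw [← e2]; ring
    rw [e] at this
    linarith
  have q3 : (Nat.primeCounting Y : ℝ) * Nat.primeCounting (Y ^ 2) ≤
      (Nat.primeCounting (2 * Y + 2) : ℝ) * Nat.primeCounting ((Y + 1) ^ 2) := by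
    have h1 : Nat.primeCounting Y ≤ Nat.primeCounting (2 * Y + 2) :=
      Nat.monotone_primeCounting (by omega)
    have h2 : Nat.primeCounting (Y ^ 2) ≤ Nat.primeCounting ((Y + 1) ^ 2) :=
      Nat.monotone_primeCounting (by gcongr; omega)
    exact_mod_cast Nat.mul_le_mul h1 h2
  -- choose J
  obtain ⟨J, hJ1, hJ2⟩ := exists_nat_pow_near (Real.one_le_exp (by linarith : 0 ≤ L / 4)) (by norm_num : (1 : ℝ) < 2)
  have up : nonICongruentCount (Real.exp L) ≤ _ := count_upper X J
  have lo : _ ≤ nonICongruentCount (Real.exp L) + 1 := count_lower X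
  have pm := pair_le_main X Y Z hX2
  have mp := main_le_pair X Y Z hX3
  have hmm : mm L = mainSum X Y Z := rfl
  rw [← hmm] at pm mp
  have up' : (nonICongruentCount (Real.exp L) : ℝ) ≤
      1 + Nat.primeCounting X + (pairSet X).card + (Nat.sqrt X + 1) + 8 ^ J + (X / 2 ^ J : ℕ) := by
    exact_mod_cast up
  have lo' : (Nat.primeCounting X : ℝ) + (pairSet X).card ≤ nonICongruentCount (Real.exp L) + 1 := by
    exact_mod_cast lo
  have pm' : ((pairSet X).card : ℝ) ≤ Nat.primeCounting Y * Nat.primeCounting (Y ^ 2) + mm L := by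
    exact_mod_cast pm
  have mp' : (mm L : ℝ) ≤ (pairSet X).card + Nat.primeCounting (2 * Y + 2) * Nat.primeCounting ((Y + 1) ^ 2)
      + Nat.primeCounting Z * Nat.primeCounting Z := by
    exact_mod_cast mp
  set E := Real.exp (3 * L / 4) with hE
  have hE1 : 1 ≤ E := Real.one_le_exp (by linarith)
  have s1 : (Nat.sqrt X : ℝ) ≤ E := by
    have h1 : Nat.sqrt X ≤ Z := by
      by_contra! h
      have : (Z + 1) * (Z + 1) ≤ Nat.sqrt X * Nat.sqrt X := Nat.mul_le_mul h h
      have := Nat.sqrt_le X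
      nlinarith
    calc (Nat.sqrt X : ℝ) ≤ Z := by exact_mod_cast h1
      _ ≤ _ := hZle
      _ ≤ E := Real.exp_le_exp.mpr (by linarith)
  have e4 : Real.exp (L / 4) ^ 3 = E := by
    rw [← Real.exp_nat_mul, hE]; congr 1; push_cast; ring
  have s2 : (8 : ℝ) ^ J ≤ E := by
    have : (8 : ℝ) ^ J = (2 ^ J) ^ 3 := by rw [← pow_mul, mul_comm, pow_mul]; norm_num
    rw [this, ← e4]; gcongr
  have s3 : ((X / 2 ^ J : ℕ) : ℝ) ≤ 2 * E := by
    refine Nat.cast_div_le.trans ?_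
    push_cast
    rw [div_le_iff₀ (by positivity)]
    have h5 : Real.exp L = E * Real.exp (L / 4) := by
      rw [hE, ← Real.exp_add]; congr 1; ring
    rw [pow_succ] at hJ2
    have h6 : E * Real.exp (L / 4) ≤ E * (2 ^ J * 2) :=
      mul_le_mul_of_nonneg_left hJ2.le (by linarith only [hE1])
    linarith only [h6, h5, hXle]
  have r : 592 * Real.exp L / L ^ 2 = 576 * Real.exp L / L ^ 2 + 16 * Real.exp L / L ^ 2 := by ring
  have r0 : 0 ≤ 16 * Real.exp L / L ^ 2 := by positivity
  rw [r, abs_le]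
  constructor <;> linarith

lemma count_exp_tendsto : Tendsto (fun L : ℝ => (nonICongruentCount (Real.exp L) : ℝ) * L / Real.exp L)
    atTop (𝓝 (1 + Real.log 2)) := by
  have hA : Tendsto (fun L : ℝ => (Nat.primeCounting ⌊Real.exp L⌋₊ : ℝ) * L / Real.exp L) atTop (𝓝 1) := by
    have := pnt.comp Real.tendsto_exp_atTop
    refine this.congr fun L => ?_
    simp
  have hB := mm_tendsto
  obtain ⟨b, hb1, hb⟩ := pi_le_eventually
  have t3 : Tendsto (fun L : ℝ => Real.exp (L / 3)) atTop atTop :=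
    Real.tendsto_exp_atTop.comp (tendsto_id.atTop_div_const (by norm_num))
  have hE : Tendsto (fun L : ℝ => 24 * ((L / 4) ^ 1 * Real.exp (-(L / 4))) + 592 * L⁻¹) atTop (𝓝 0) := by
    have h1 := (Real.tendsto_pow_mul_exp_neg_atTop_nhds_zero 1).comp
      (tendsto_id.atTop_div_const (by norm_num : (0 : ℝ) < 4))
    have h2 := (h1.const_mul 24).add ((tendsto_inv_atTop_zero (𝕜 := ℝ)).const_mul 592)
    simpa using h2
  have hD : Tendsto (fun L : ℝ => (nonICongruentCount (Real.exp L) : ℝ) * L / Real.exp L -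
      ((Nat.primeCounting ⌊Real.exp L⌋₊ : ℝ) * L / Real.exp L + (mm L : ℝ) * L / Real.exp L)) atTop (𝓝 0) := by
    refine squeeze_zero_norm' ?_ hE
    filter_upwards [t3.eventually_ge_atTop b, eventually_ge_atTop 1] with L hLb hL
    have h := count_bound hb1 hb hL hLb
    have hL0 : 0 < L := by linarith
    have hx := Real.exp_pos L
    have e : (nonICongruentCount (Real.exp L) : ℝ) * L / Real.exp L -
      ((Nat.primeCounting ⌊Real.exp L⌋₊ : ℝ) * L / Real.exp L + (mm L : ℝ) * L / Real.exp L) =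
      ((nonICongruentCount (Real.exp L) : ℝ) - Nat.primeCounting ⌊Real.exp L⌋₊ - mm L) * (L / Real.exp L) := by
      ring
    rw [e, Real.norm_eq_abs, abs_mul, abs_of_pos (by positivity : 0 < L / Real.exp L)]
    refine (mul_le_mul_of_nonneg_right h (by positivity)).trans (le_of_eq ?_)
    have h5 : Real.exp L = Real.exp (3 * L / 4) * Real.exp (L / 4) := by
      rw [← Real.exp_add]; congr 1; ring
    rw [Real.exp_neg, h5]
    have := Real.exp_pos (3 * L / 4)
    have := Real.exp_pos (L / 4)
    field_simp
    ring
  have := hD.add (hA.add hB)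
  simpa using this

end ICong

end

/-- `f(x) ~ (1 + ln 2) x / ln x` as `x → ∞`. -/
theorem nonICongruentCount_asymptotic :
    Filter.Tendsto (fun x : ℝ => (nonICongruentCount x : ℝ) * Real.log x / x)
      Filter.atTop (nhds (1 + Real.log 2)) := by
  have h := ICong.count_exp_tendsto.comp Real.tendsto_log_atTop
  refine h.congr' ?_
  filter_upwards [Filter.eventually_gt_atTop 0] with x hx
  simp only [Function.comp_apply, Real.exp_log hx]
end
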